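/- arXiv:math/0610278 — 3 statements merged into one kernel-verified Lean document; each statement's English description precedes it below -/
import Mathlib

section
/- Let 0 < q < 1, let m ≥ 1, and let x_1,…,x_{2m} be nonzero complex numbers such that for all i ≠ j, x_j/x_i ≠ −q^l for every l ∈ ℤ (so that θ(−x_j/x_i;q) ≠ 0). Then pfaff_{1≤i,j≤2m}(θ(x_j/x_i;q)/θ(−x_j/x_i;q)) = Π_{1≤i<j≤2m} θ(x_j/x_i;q)/θ(−x_j/x_i;q). -/
/-- The pfaffian-type sum `(1/(2^M · M!)) · Σ_σ sgn(σ) · Π_{i=1}^{M} a_{σ(2i−1),σ(2i)}`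
with `M = ⌊m/2⌋`. -/
noncomputable def pfaff (m : ℕ) (A : Matrix (Fin m) (Fin m) ℂ) : ℂ :=
  (1 / ((2 : ℂ) ^ (m / 2) * (Nat.factorial (m / 2) : ℂ))) *
    ∑ σ : Equiv.Perm (Fin m), ((Equiv.Perm.sign σ : ℤ) : ℂ) *
      ∏ i : Fin (m / 2),
        A (σ ⟨2 * (i : ℕ), by have := i.isLt; omega⟩)
          (σ ⟨2 * (i : ℕ) + 1, by have := i.isLt; omega⟩)
/-- The infinite q-Pochhammer symbol `(a;q)_∞ = Π_{k≥0} (1 − a q^k)`. -/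
noncomputable def qPoch (q : ℝ) (a : ℂ) : ℂ := ∏' k : ℕ, (1 - a * (q : ℂ) ^ k)

/-- The theta function `θ(x;q) = (x;q)_∞ (q/x;q)_∞`. -/
noncomputable def theta (q : ℝ) (x : ℂ) : ℂ := qPoch q x * qPoch q ((q : ℂ) / x)


lemma qP_summable {q : ℝ} (hq0 : 0 < q) (hq1 : q < 1) (a : ℂ) :
    Summable (fun k : ℕ => ‖-(a * (q : ℂ) ^ k)‖) := by
  have : (fun k : ℕ => ‖-(a * (q : ℂ) ^ k)‖) = fun k : ℕ => ‖a‖ * q ^ k := by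
    funext k
    simp [abs_of_pos hq0]
  rw [this]
  exact (summable_geometric_of_lt_one hq0.le hq1).mul_left _

lemma qP_step {q : ℝ} (hq0 : 0 < q) (hq1 : q < 1) (a : ℂ) :
    qPoch q a = (1 - a) * qPoch q (a * q) := by
  unfold qPoch
  rw [tprod_eq_zero_mul']
  · simp only [pow_zero, mul_one, pow_succ', mul_assoc]
  · have := multipliable_one_add_of_summable (qP_summable hq0 hq1 (a * q))
    simpa only [← sub_eq_add_neg, pow_succ', mul_assoc] using this

lemma qP_ne_zero {q : ℝ} (hq0 : 0 < q) (hq1 : q < 1) (a : ℂ)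
    (h : ∀ k : ℕ, 1 - a * (q : ℂ) ^ k ≠ 0) : qPoch q a ≠ 0 := by
  unfold qPoch
  have := tprod_one_add_ne_zero_of_summable (f := fun k : ℕ => -(a * (q : ℂ) ^ k))
    (by simpa only [← sub_eq_add_neg] using h) (qP_summable hq0 hq1 a)
  simpa only [← sub_eq_add_neg] using this

lemma qP_diff {q : ℝ} (hq0 : 0 < q) (hq1 : q < 1) : Differentiable ℂ (qPoch q) := by
  intro a
  have hK : IsOpen (Metric.ball (0 : ℂ) (‖a‖ + 1)) := Metric.isOpen_ball
  have h1 := Summable.hasProdLocallyUniformlyOn_nat_one_add (K := Metric.ball (0 : ℂ) (‖a‖ + 1))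
    (f := fun (k : ℕ) (a : ℂ) => -(a * (q : ℂ) ^ k)) hK
    (u := fun k => (‖a‖ + 1) * q ^ k)
    ((summable_geometric_of_lt_one hq0.le hq1).mul_left _)
    (.of_forall fun n x hx => by
      simp only [norm_neg, norm_mul, norm_pow, Complex.norm_real, Real.norm_eq_abs,
        abs_of_pos hq0]
      have : ‖x‖ < ‖a‖ + 1 := by simpa using hx
      gcongr)
    (fun n => by fun_prop)
  have h2 := h1.differentiableOn (.of_forall fun _ ↦ by
      simpa [Finset.prod_fn] using DifferentiableOn.finsetProd (fun _ _ ↦ by fun_prop)) hK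
  have h3 := h2.differentiableAt (hK.mem_nhds (x := a) (by simp))
  have h4 : qPoch q = fun x => ∏' (i : ℕ), (1 + -(x * (q : ℂ) ^ i)) := by
    funext x
    simp only [qPoch, sub_eq_add_neg]
  rw [h4]
  exact h3

lemma th_q {q : ℝ} (hq0 : 0 < q) (hq1 : q < 1) (z : ℂ) (hz : z ≠ 0) :
    theta q (q * z) = -theta q z / z := by
  have hqc : (q : ℂ) ≠ 0 := by exact_mod_cast hq0.ne'
  unfold theta
  rw [qP_step hq0 hq1 z, show (q : ℂ) / (q * z) = 1 / z by field_simp,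
    qP_step hq0 hq1 (1 / z), mul_comm z (q : ℂ), show 1 / z * (q : ℂ) = q / z by field_simp]
  field_simp
  ring

lemma th_inv {q : ℝ} (hq0 : 0 < q) (hq1 : q < 1) (z : ℂ) (hz : z ≠ 0) :
    theta q z⁻¹ = -theta q z / z := by
  unfold theta
  rw [qP_step hq0 hq1 z, show (q : ℂ) / z⁻¹ = z * q by field_simp,
    qP_step hq0 hq1 (z⁻¹), show z⁻¹ * (q : ℂ) = q / z by field_simp]
  field_simp
  ring

lemma th_zero {q : ℝ} (hq0 : 0 < q) (hq1 : q < 1) (z : ℂ) (hz : z ≠ 0)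
    (h : theta q z = 0) : ∃ l : ℤ, z = (q : ℂ) ^ l := by
  have hqc : (q : ℂ) ≠ 0 := by exact_mod_cast hq0.ne'
  by_contra! hc
  refine mul_ne_zero (qP_ne_zero hq0 hq1 _ ?_) (qP_ne_zero hq0 hq1 _ ?_) h
  · intro k hk
    apply hc (-(k : ℤ))
    rw [zpow_neg, zpow_natCast]
    field_simp
    linear_combination -hk
  · intro k hk
    apply hc ((k : ℤ) + 1)
    rw [zpow_add₀ hqc, zpow_natCast, zpow_one]
    field_simp at hk
    linear_combination hk

lemma th_diff {q : ℝ} (hq0 : 0 < q) (hq1 : q < 1) (z : ℂ) (hz : z ≠ 0) :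
    DifferentiableAt ℂ (theta q) z := by
  unfold theta
  exact (qP_diff hq0 hq1 z).mul
    ((qP_diff hq0 hq1 (q / z)).comp z (by fun_prop (disch := assumption)))

lemma th_zpow {q : ℝ} (hq0 : 0 < q) (hq1 : q < 1) (l : ℤ) :
    ∃ c : ℂ, c ≠ 0 ∧ ∀ z : ℂ, z ≠ 0 → theta q ((q : ℂ) ^ l * z) = c * z ^ (-l) * theta q z := by
  have hqc : (q : ℂ) ≠ 0 := by exact_mod_cast hq0.ne'
  induction l using Int.induction_on with
  | zero => exact ⟨1, one_ne_zero, fun z hz => by simp⟩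
  | succ l ih =>
    obtain ⟨c, hc, h⟩ := ih
    refine ⟨-c / (q : ℂ) ^ (l : ℤ), div_ne_zero (neg_ne_zero.2 hc) (zpow_ne_zero _ hqc), fun z hz => ?_⟩
    have h1 := th_q hq0 hq1 ((q : ℂ) ^ (l : ℤ) * z) (mul_ne_zero (zpow_ne_zero _ hqc) hz)
    rw [h z hz] at h1
    rw [zpow_add₀ hqc, zpow_one, mul_comm _ (q : ℂ), mul_assoc, h1, neg_add, zpow_add₀ hz, zpow_neg_one]
    have := zpow_ne_zero (l : ℤ) hqc
    field_simp
  | pred l ih =>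
    obtain ⟨c, hc, h⟩ := ih
    refine ⟨-c * (q : ℂ) ^ (-(l : ℤ) - 1), mul_ne_zero (neg_ne_zero.2 hc) (zpow_ne_zero _ hqc), fun z hz => ?_⟩
    have hz2 := (mul_ne_zero (zpow_ne_zero (-(l : ℤ) - 1) hqc) hz)
    have h1 := th_q hq0 hq1 ((q : ℂ) ^ (-(l : ℤ) - 1) * z) hz2
    rw [← mul_assoc, ← zpow_one_add₀ hqc, show (1 + (-(l : ℤ) - 1)) = -(l : ℤ) by ring, h z hz] at h1
    have h2 : theta q ((q : ℂ) ^ (-(l : ℤ) - 1) * z) =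
      - (c * z ^ (- -(l : ℤ)) * theta q z) * ((q : ℂ) ^ (-(l : ℤ) - 1) * z) := by
      rw [h1]; field_simp
    rw [h2, show (-(-(l : ℤ) - 1)) = - -(l : ℤ) + 1 by ring, zpow_add₀ hz, zpow_one]
    ring

lemma th_one {q : ℝ} (hq0 : 0 < q) (hq1 : q < 1) : theta q 1 = 0 := by
  unfold theta
  rw [qP_step hq0 hq1 1]; simp

lemma th_deriv_one {q : ℝ} (hq0 : 0 < q) (hq1 : q < 1) : ∃ d : ℂ, d ≠ 0 ∧
    HasDerivAt (theta q) d 1 := by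
  have hR : DifferentiableAt ℂ (fun z : ℂ => qPoch q (z * q) * qPoch q (q / z)) 1 :=
    ((qP_diff hq0 hq1 _).comp (1 : ℂ) (by fun_prop)).mul
    ((qP_diff hq0 hq1 _).comp (1 : ℂ) (by fun_prop (disch := simp)))
  have h1 : HasDerivAt (fun z : ℂ => 1 - z) (-1) 1 := (hasDerivAt_id (1 : ℂ)).const_sub 1
  have h2 := h1.mul hR.hasDerivAt
  have hne : qPoch q (1 * q) ≠ 0 := by
    apply qP_ne_zero hq0 hq1
    intro k hk
    have h : (q : ℂ) ^ (k + 1) = 1 := by linear_combination -hk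
    have h' : q ^ (k + 1) = 1 := by exact_mod_cast h
    exact (pow_lt_one₀ hq0.le hq1 (Nat.succ_ne_zero k)).ne h'
  refine ⟨_, ?_, (h2.congr_of_eventuallyEq (.of_forall fun z => ?_))⟩
  · simp at hne ⊢
    exact hne
  · simp only [theta, Pi.mul_apply]
    rw [qP_step hq0 hq1 z, mul_assoc]

lemma simple_mul {A B : ℂ → ℂ} {w d : ℂ} (hA : HasDerivAt A d w) (hd : d ≠ 0) (h0 : A w = 0)
    (hB : DifferentiableAt ℂ B w) (hBw : B w ≠ 0) : deriv (fun z => A z * B z) w ≠ 0 := by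
  have := (hA.mul hB.hasDerivAt).deriv
  change deriv (A * B) w ≠ 0
  rw [this, h0]
  simpa using ⟨hd, hBw⟩

lemma th_deriv {q : ℝ} (hq0 : 0 < q) (hq1 : q < 1) (z : ℂ) (hz : z ≠ 0)
    (h : theta q z = 0) : deriv (theta q) z ≠ 0 := by
  have hqc : (q : ℂ) ≠ 0 := by exact_mod_cast hq0.ne'
  obtain ⟨l, rfl⟩ := th_zero hq0 hq1 z hz h
  obtain ⟨c, hc, hl⟩ := th_zpow hq0 hq1 l
  obtain ⟨d, hd, hD⟩ := th_deriv_one hq0 hq1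
  have hE : theta q =ᶠ[nhds ((q : ℂ) ^ l)] fun w => theta q (w / (q : ℂ) ^ l) *
      (c * (w / (q : ℂ) ^ l) ^ (-l)) := by
    filter_upwards [isOpen_ne.mem_nhds hz] with w hw
    have := hl (w / (q : ℂ) ^ l) (div_ne_zero hw hz)
    rw [mul_div_cancel₀ _ hz] at this
    rw [this]; ring
  rw [hE.deriv_eq]
  have h1 : (q : ℂ) ^ l / (q : ℂ) ^ l = 1 := div_self hz
  have h2 : HasDerivAt (fun w : ℂ => w / (q : ℂ) ^ l) (1 / (q : ℂ) ^ l) ((q : ℂ) ^ l) :=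
    (hasDerivAt_id _).div_const _
  have hD' : HasDerivAt (theta q) d ((q : ℂ) ^ l / (q : ℂ) ^ l) := by rwa [h1]
  refine simple_mul (d := d * (1 / (q : ℂ) ^ l)) (HasDerivAt.comp (h := fun w : ℂ => w / (q : ℂ) ^ l) _ hD' h2) ?_ ?_ ?_ ?_
  · exact mul_ne_zero hd (one_div_ne_zero hz)
  · rw [h1, th_one hq0 hq1]
  · refine DifferentiableAt.const_mul (DifferentiableAt.zpow h2.differentiableAt (Or.inl ?_)) _
    rw [h1]; exact one_ne_zero
  · rw [h1]; simpa using hc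

noncomputable def ff (q : ℝ) (z : ℂ) : ℂ := theta q z / theta q (-z)

lemma ff_neg (q : ℝ) (z : ℂ) : ff q (-z) = (ff q z)⁻¹ := by
  simp [ff]

lemma ff_inv {q : ℝ} (hq0 : 0 < q) (hq1 : q < 1) (z : ℂ) (hz : z ≠ 0) :
    ff q z⁻¹ = -ff q z := by
  unfold ff
  rw [th_inv hq0 hq1 z hz, ← inv_neg, th_inv hq0 hq1 (-z) (neg_ne_zero.2 hz), neg_div_neg_eq,
    neg_div, neg_div, div_div_div_cancel_right₀ hz]

lemma ff_q {q : ℝ} (hq0 : 0 < q) (hq1 : q < 1) (z : ℂ) (hz : z ≠ 0) :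
    ff q (q * z) = -ff q z := by
  unfold ff
  rw [th_q hq0 hq1 z hz, ← mul_neg, th_q hq0 hq1 (-z) (neg_ne_zero.2 hz), neg_div_neg_eq,
    neg_div, neg_div, div_div_div_cancel_right₀ hz]

lemma ff_zpow {q : ℝ} (hq0 : 0 < q) (hq1 : q < 1) (l : ℤ) (z : ℂ) (hz : z ≠ 0) :
    ff q ((q : ℂ) ^ l * z) = (-1) ^ l * ff q z := by
  have hqc : (q : ℂ) ≠ 0 := by exact_mod_cast hq0.ne'
  have h1 : (-1 : ℂ) ≠ 0 := by norm_num
  induction l using Int.induction_on with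
  | zero => simp
  | succ l ih =>
    rw [zpow_add₀ hqc, zpow_one, mul_comm _ (q : ℂ), mul_assoc,
      ff_q hq0 hq1 _ (mul_ne_zero (zpow_ne_zero _ hqc) hz), ih, zpow_add₀ h1]
    ring
  | pred l ih =>
    have := ff_q hq0 hq1 ((q : ℂ) ^ (-(l : ℤ) - 1) * z) (mul_ne_zero (zpow_ne_zero _ hqc) hz)
    rw [← mul_assoc, ← zpow_one_add₀ hqc, show (1 + (-(l : ℤ) - 1)) = -(l : ℤ) by ring, ih] at this
    rw [zpow_sub₀ h1, zpow_one]
    linear_combination this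

lemma entire_div {h P : ℂ → ℂ} (hh : Differentiable ℂ h) (hP : Differentiable ℂ P)
    (hs : ∀ w, P w = 0 → deriv P w ≠ 0) (h0 : ∀ w, P w = 0 → h w = 0) :
    ∃ g : ℂ → ℂ, Differentiable ℂ g ∧ ∀ w, P w ≠ 0 → g w = h w / P w := by
  classical
  refine ⟨fun w => if P w = 0 then deriv h w / deriv P w else h w / P w, ?_,
    fun w hw => by simp [hw]⟩
  intro w
  by_cases hw : P w = 0
  · have d1 : DifferentiableAt ℂ (dslope h w) w :=
      ((Complex.differentiableOn_dslope (s := Set.univ) Filter.univ_mem).2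
        hh.differentiableOn).differentiableAt Filter.univ_mem
    have d2 : DifferentiableAt ℂ (dslope P w) w :=
      ((Complex.differentiableOn_dslope (s := Set.univ) Filter.univ_mem).2
        hP.differentiableOn).differentiableAt Filter.univ_mem
    have hne : dslope P w w ≠ 0 := by rw [dslope_same]; exact hs w hw
    refine (d1.div d2 hne).congr_of_eventuallyEq ?_
    filter_upwards [d2.continuousAt.eventually_ne hne] with z hz
    by_cases hzw : z = w
    · subst hzw
      simp [hw, dslope_same]
    · rw [dslope_of_ne _ hzw, slope_def_field, hw, sub_zero] at hz
      have hPz : P z ≠ 0 := fun h => hz (by simp [h])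
      have hzw' : z - w ≠ 0 := sub_ne_zero.2 hzw
      simp only [hPz, if_false, Pi.div_apply]
      rw [dslope_of_ne _ hzw, dslope_of_ne _ hzw, slope_def_field, slope_def_field, hw, h0 w hw,
        sub_zero, sub_zero, div_div_div_cancel_right₀ hzw']
  · refine ((hh w).div (hP w) hw).congr_of_eventuallyEq ?_
    filter_upwards [(hP w).continuousAt.eventually_ne hw] with z hz
    simp [hz]

lemma zero_ext {G P : ℂ → ℂ} (hG : Differentiable ℂ G) (hP : Differentiable ℂ P)
    (hs : ∀ w, P w = 0 → deriv P w ≠ 0) (h0 : ∀ w, P w ≠ 0 → G w = 0) (w : ℂ) : G w = 0 := by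
  by_cases hw : P w = 0
  · have h1 := (hP w).hasDerivAt.eventually_ne (c := 0) (hs w hw)
    have h2 : Filter.Tendsto G (nhdsWithin w {w}ᶜ) (nhds (G w)) :=
      (hG w).continuousAt.tendsto.mono_left nhdsWithin_le_nhds
    have h3 : Filter.Tendsto G (nhdsWithin w {w}ᶜ) (nhds 0) :=
      tendsto_const_nhds.congr' (by filter_upwards [h1] with z hz using (h0 z hz).symm)
    exact tendsto_nhds_unique h2 h3
  · exact h0 w hw

lemma anti_zero {g : ℂ → ℂ} (hg : Differentiable ℂ g) (τ : ℝ) (hτ : τ ≠ 0)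
    (h1 : ∀ w, g (w + τ) = -g w) (h2 : ∀ w, g (w + 2 * Real.pi * Complex.I) = g w) (w : ℂ) :
    g w = 0 := by
  have p1 : Function.Periodic (fun w => ‖g w‖) (τ : ℂ) := fun w => by simp [h1]
  have p2 : Function.Periodic (fun w => ‖g w‖) (2 * Real.pi * Complex.I) := fun w => by simp [h2]
  have hb : Bornology.IsBounded (Set.range g) := by
    obtain ⟨C, hC⟩ := (isCompact_closedBall (0 : ℂ) (|τ| + 2 * Real.pi)).exists_bound_of_continuousOn
      hg.continuous.continuousOn
    refine isBounded_iff_forall_norm_le.2 ⟨C, ?_⟩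
    rintro _ ⟨w, rfl⟩
    have e1 := p1.sub_zsmul_eq ⌊w.re / τ⌋ (x := w - ⌊w.im / (2 * Real.pi)⌋ • (2 * Real.pi * Complex.I))
    have e2 := p2.sub_zsmul_eq ⌊w.im / (2 * Real.pi)⌋ (x := w)
    rw [← e2, ← e1]
    apply hC
    rw [mem_closedBall_zero_iff]
    refine (Complex.norm_le_abs_re_add_abs_im _).trans ?_
    have hpi := Real.pi_pos
    refine add_le_add ?_ ?_
    · have : (w - ⌊w.im / (2 * Real.pi)⌋ • (2 * Real.pi * Complex.I) - ⌊w.re / τ⌋ • (τ : ℂ)).re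
        = Int.fract (w.re / τ) * τ := by
        rw [Int.fract, sub_mul, div_mul_cancel₀ _ hτ]
        simp
      rw [this, abs_mul, abs_of_nonneg (Int.fract_nonneg _)]
      exact mul_le_of_le_one_left (abs_nonneg _) (Int.fract_lt_one _).le
    · have : (w - ⌊w.im / (2 * Real.pi)⌋ • (2 * Real.pi * Complex.I) - ⌊w.re / τ⌋ • (τ : ℂ)).im
        = Int.fract (w.im / (2 * Real.pi)) * (2 * Real.pi) := by
        rw [Int.fract, sub_mul, div_mul_cancel₀ _ (by positivity)]
        simp
      rw [this, abs_mul, abs_of_nonneg (Int.fract_nonneg _), abs_of_pos (by positivity)]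
      exact mul_le_of_le_one_left (by positivity) (Int.fract_lt_one _).le
  have h3 := hg.apply_eq_apply_of_bounded hb (w + τ) w
  rw [h1] at h3
  have : (2 : ℂ) * g w = 0 := by linear_combination -h3
  simpa using this

lemma pfrac {q : ℝ} (hq0 : 0 < q) (hq1 : q < 1) {ι : Type*} [Fintype ι] [DecidableEq ι]
    (hodd : Odd (Fintype.card ι)) (x : ι → ℂ) (hx : ∀ i, x i ≠ 0)
    (hd : ∀ j k, j ≠ k → ∀ l : ℤ, x k ≠ (q : ℂ) ^ l * x j) (t : ℂ) (ht : t ≠ 0)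
    (htx : ∀ j, theta q (-(x j * t)) ≠ 0) :
    ∑ j, ff q (x j * t) * ∏ k ∈ Finset.univ.erase j, ff q (-(x k / x j)) =
      ∏ j, ff q (x j * t) := by
  have hqc : (q : ℂ) ≠ 0 := by exact_mod_cast hq0.ne'
  set c : ι → ℂ := fun j => ∏ k ∈ Finset.univ.erase j, ff q (-(x k / x j)) with hc
  set a : ι → ℂ → ℂ := fun j w => theta q (-(x j * Complex.exp w)) with ha
  set b : ι → ℂ → ℂ := fun j w => theta q (x j * Complex.exp w) with hb
  set P : ℂ → ℂ := fun w => ∏ j, a j w with hPdef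
  set h : ℂ → ℂ := fun w => ∏ j, b j w - ∑ j, c j * b j w * ∏ k ∈ Finset.univ.erase j, a k w
    with hhdef
  set F : ℂ → ℂ := fun w => ∏ j, ff q (x j * Complex.exp w) - ∑ j, ff q (x j * Complex.exp w) * c j
    with hF
  have hne : ∀ j w, x j * Complex.exp w ≠ 0 := fun j w => mul_ne_zero (hx j) (Complex.exp_ne_zero w)
  have hda : ∀ j, Differentiable ℂ (a j) := fun j w =>
    (th_diff hq0 hq1 _ (neg_ne_zero.2 (hne j w))).comp w
      (f := fun w => -(x j * Complex.exp w)) (by fun_prop)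
  have hdb : ∀ j, Differentiable ℂ (b j) := fun j w =>
    (th_diff hq0 hq1 _ (hne j w)).comp w (f := fun w => x j * Complex.exp w) (by fun_prop)
  have hdP : Differentiable ℂ P := by
    rw [hPdef]; fun_prop
  have hdh : Differentiable ℂ h := by
    rw [hhdef]; fun_prop
  -- zeros of `a j`
  have haz : ∀ j w, a j w = 0 → ∃ l : ℤ, x j * Complex.exp w = -(q : ℂ) ^ l := by
    intro j w hw
    obtain ⟨l, hl⟩ := th_zero hq0 hq1 _ (neg_ne_zero.2 (hne j w)) hw
    exact ⟨l, by rw [← hl, neg_neg]⟩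
  have hane : ∀ j k w, j ≠ k → a j w = 0 → a k w ≠ 0 := by
    intro j k w hjk h1 h2
    obtain ⟨l, hl⟩ := haz j w h1
    obtain ⟨n, hn⟩ := haz k w h2
    apply hd j k hjk (n - l)
    apply mul_right_cancel₀ (Complex.exp_ne_zero w)
    rw [hn, mul_assoc, hl, mul_neg, ← zpow_add₀ hqc, sub_add_cancel]
  have hPz : ∀ w, P w = 0 → ∃ j, a j w = 0 := by
    intro w hw
    obtain ⟨j, -, hj⟩ := Finset.prod_eq_zero_iff.1 hw
    exact ⟨j, hj⟩
  have hPs : ∀ w, P w = 0 → deriv P w ≠ 0 := by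
    intro w hw
    obtain ⟨j, hj⟩ := hPz w hw
    have hPe : P = fun w => a j w * ∏ k ∈ Finset.univ.erase j, a k w := by
      funext w
      exact (Finset.mul_prod_erase _ _ (Finset.mem_univ j)).symm
    rw [hPe]
    have hz := neg_ne_zero.2 (hne j w)
    have e1 : HasDerivAt (fun w => -(x j * Complex.exp w)) (-(x j * Complex.exp w)) w :=
      ((Complex.hasDerivAt_exp w).const_mul (x j)).neg
    refine simple_mul (HasDerivAt.comp (h := fun w => -(x j * Complex.exp w)) w
      (th_diff hq0 hq1 _ hz).hasDerivAt e1) (mul_ne_zero (th_deriv hq0 hq1 _ hz hj) hz) hj ?_ ?_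
    · fun_prop
    · refine Finset.prod_ne_zero_iff.2 fun k hk => hane j k w (Finset.ne_of_mem_erase hk).symm hj
  have hP0 : ∀ w, P w = 0 → h w = 0 := by
    intro w hw
    obtain ⟨j, hj⟩ := hPz w hw
    obtain ⟨l, hl⟩ := haz j w hj
    simp only [hhdef]
    rw [Finset.sum_eq_single j, ← Finset.mul_prod_erase _ _ (Finset.mem_univ j)]
    · have e1 : ∀ k ∈ Finset.univ.erase j, b k w = (-1) ^ l * (ff q (-(x k / x j)) * a k w) := by
        intro k hk
        have hk' := hane j k w (Finset.ne_of_mem_erase hk).symm hj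
        have e2 : x k * Complex.exp w = (q : ℂ) ^ l * (-(x k / x j)) := by
          have := hx j
          field_simp
          linear_combination x k * hl
        have e3 := ff_zpow hq0 hq1 l (-(x k / x j)) (neg_ne_zero.2 (div_ne_zero (hx k) (hx j)))
        rw [← mul_assoc, ← e3, ← e2]
        simp only [ff, ha, hb] at hk' ⊢
        rw [div_mul_cancel₀ _ hk']
      rw [Finset.prod_congr rfl e1, Finset.prod_mul_distrib, Finset.prod_mul_distrib,
        Finset.prod_const, Finset.card_erase_of_mem (Finset.mem_univ j), Finset.card_univ]
      obtain ⟨n, hn⟩ := hodd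
      have e4 : ((-1 : ℂ) ^ l) ^ (Fintype.card ι - 1) = 1 := by
        rw [hn, Nat.add_sub_cancel, pow_mul, ← zpow_natCast ((-1 : ℂ) ^ l) 2, ← zpow_mul, mul_comm,
          zpow_mul]
        simp
      rw [e4]
      simp only [hc]
      ring
    · intro k _ hk
      rw [Finset.prod_eq_zero (Finset.mem_erase.2 ⟨hk.symm, Finset.mem_univ j⟩) hj, mul_zero]
    · simp
  obtain ⟨g, hg, hgP⟩ := entire_div hdh hdP hPs hP0
  have hgF : ∀ w, P w ≠ 0 → g w = F w := by
    intro w hw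
    rw [hgP w hw, div_eq_iff hw]
    have hw' := fun j => Finset.prod_ne_zero_iff.1 hw j (Finset.mem_univ j)
    have hbf : ∀ j, b j w = ff q (x j * Complex.exp w) * a j w := by
      intro j
      have := hw' j
      simp only [ff, ha, hb] at this ⊢
      rw [div_mul_cancel₀ _ this]
    simp only [hhdef, hF, hPdef, sub_mul, Finset.sum_mul]
    congr 1
    · rw [← Finset.prod_mul_distrib]
      exact Finset.prod_congr rfl fun j _ => hbf j
    · refine Finset.sum_congr rfl fun j _ => ?_
      rw [← Finset.mul_prod_erase Finset.univ (fun j => a j w) (Finset.mem_univ j), hbf j]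
      ring
  have hτ : Real.log q ≠ 0 := (Real.log_neg hq0 hq1).ne
  have hexp : ∀ w, Complex.exp (w + (Real.log q : ℝ)) = q * Complex.exp w := by
    intro w
    rw [Complex.exp_add, ← Complex.ofReal_exp, Real.exp_log hq0, mul_comm]
  have hexp2 : ∀ w, Complex.exp (w + 2 * Real.pi * Complex.I) = Complex.exp w :=
    Complex.exp_periodic
  have hFτ : ∀ w, F (w + (Real.log q : ℝ)) = - F w := by
    intro w
    simp only [hF, hexp]
    have : ∀ j, ff q (x j * (q * Complex.exp w)) = -ff q (x j * Complex.exp w) := fun j => by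
      rw [← ff_q hq0 hq1 _ (hne j w)]; congr 1; ring
    simp only [this, Finset.prod_neg, Finset.card_univ, hodd.neg_one_pow, neg_mul,
      Finset.sum_neg_distrib, one_mul]
    ring
  have hPτ : ∀ w, P w ≠ 0 → P (w + (Real.log q : ℝ)) ≠ 0 := by
    intro w hw
    refine Finset.prod_ne_zero_iff.2 fun j _ => ?_
    have hw' := Finset.prod_ne_zero_iff.1 hw j (Finset.mem_univ j)
    simp only [ha, hexp] at hw' ⊢
    rw [show -(x j * (q * Complex.exp w)) = q * (-(x j * Complex.exp w)) by ring,
      th_q hq0 hq1 _ (neg_ne_zero.2 (hne j w))]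
    exact div_ne_zero (neg_ne_zero.2 hw') (neg_ne_zero.2 (hne j w))
  have hg1 : ∀ w, g (w + (Real.log q : ℝ)) = - g w := by
    intro w
    have := zero_ext (G := fun w => g (w + (Real.log q : ℝ)) + g w) (by fun_prop) hdP hPs
      (fun w hw => by rw [hgF _ (hPτ w hw), hgF w hw, hFτ]; ring) w
    exact eq_neg_of_add_eq_zero_left this
  have hg2 : ∀ w, g (w + 2 * Real.pi * Complex.I) = g w := by
    intro w
    have := zero_ext (G := fun w => g (w + 2 * Real.pi * Complex.I) - g w) (by fun_prop) hdP hPs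
      (fun w hw => by
        have hw2 : P (w + 2 * Real.pi * Complex.I) ≠ 0 := by
          simpa only [hPdef, ha, hexp2] using hw
        rw [hgF _ hw2, hgF w hw]
        simp only [hF, hexp2, sub_self]) w
    exact sub_eq_zero.1 this
  have hlog : Complex.exp (Complex.log t) = t := Complex.exp_log ht
  have hfin := anti_zero hg _ hτ hg1 hg2 (Complex.log t)
  rw [hgF] at hfin
  · simp only [hF, hlog] at hfin
    exact (sub_eq_zero.1 hfin).symm
  · refine Finset.prod_ne_zero_iff.2 fun j _ => ?_
    simpa only [ha, hlog] using htx j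

noncomputable def TT (q : ℝ) (m : ℕ) (y : Fin (2 * m) → ℂ) : ℂ :=
  ∏ i : Fin m, ff q (y ⟨2 * (i : ℕ) + 1, by have := i.isLt; omega⟩ /
    y ⟨2 * (i : ℕ), by have := i.isLt; omega⟩)

lemma TT_succ (q : ℝ) (m : ℕ) (y : Fin (2 * m + 1 + 1) → ℂ) :
    TT q (m + 1) y = ff q (y 1 / y 0) * TT q m (fun i => y i.succ.succ) := by
  unfold TT
  rw [Fin.prod_univ_succ]
  rfl

noncomputable def SS (q : ℝ) (m : ℕ) (x : Fin (2 * m) → ℂ) : ℂ :=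
  ∑ σ : Equiv.Perm (Fin (2 * m)), ((Equiv.Perm.sign σ : ℤ) : ℂ) * TT q m (x ∘ σ)

noncomputable def DD (q : ℝ) (n : ℕ) (x : Fin n → ℂ) : ℂ :=
  ∏ i : Fin n, ∏ j ∈ Finset.Ioi i, ff q (x j / x i)

def tl {n : ℕ} (p : Fin (n + 1)) (x : Fin (n + 1) → ℂ) : Fin n → ℂ :=
  fun i => x (Equiv.swap 0 p i.succ)

def sg {n : ℕ} (p : Fin (n + 1)) : ℂ := if p = 0 then 1 else -1

lemma sg_sq {n : ℕ} (p : Fin (n + 1)) : sg p * sg p = 1 := by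
  unfold sg; split_ifs <;> norm_num

lemma sg_swap {n : ℕ} (p : Fin (n + 1)) :
    ((Equiv.Perm.sign (Equiv.swap 0 p) : ℤ) : ℂ) = sg p := by
  unfold sg
  split_ifs with h
  · simp [h]
  · simp [Equiv.Perm.sign_swap (Ne.symm h)]

lemma perm_sum_succ {n : ℕ} (Φ : (Fin (n + 1) → ℂ) → ℂ) (x : Fin (n + 1) → ℂ) :
    ∑ σ : Equiv.Perm (Fin (n + 1)), ((Equiv.Perm.sign σ : ℤ) : ℂ) * Φ (x ∘ σ) =
      ∑ p, sg p * ∑ e : Equiv.Perm (Fin n), ((Equiv.Perm.sign e : ℤ) : ℂ) *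
        Φ (Fin.cons (x p) (tl p x ∘ e) : Fin (n + 1) → ℂ) := by
  rw [← Equiv.sum_comp Equiv.Perm.decomposeFin.symm, Fintype.sum_prod_type]
  refine Finset.sum_congr rfl fun p _ => ?_
  rw [Finset.mul_sum]
  refine Finset.sum_congr rfl fun e _ => ?_
  have h1 : x ∘ (Equiv.Perm.decomposeFin.symm (p, e)) =
      (Fin.cons (x p) (tl p x ∘ e) : Fin (n + 1) → ℂ) := by
    funext i
    refine Fin.cases ?_ (fun i => ?_) i
    · simp
    · simp [tl]
  rw [h1, Equiv.Perm.decomposeFin.symm_sign, ← mul_assoc]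
  congr 1
  unfold sg
  split_ifs <;> simp

lemma SS_succ (q : ℝ) (m : ℕ) (x : Fin (2 * m + 1 + 1) → ℂ) :
    SS q (m + 1) x = ∑ p, sg p * ∑ r, sg r * (ff q (tl p x r / x p) * SS q m (tl r (tl p x))) := by
  have h := perm_sum_succ (n := 2 * m + 1) (TT q (m + 1)) x
  refine Eq.trans h ?_
  refine Finset.sum_congr rfl fun p _ => ?_
  congr 1
  refine (perm_sum_succ (n := 2 * m)
    (fun y => TT q (m + 1) (Fin.cons (x p) y : Fin (2 * m + 1 + 1) → ℂ)) (tl p x)).trans ?_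
  refine Finset.sum_congr rfl fun r _ => ?_
  congr 1
  unfold SS
  rw [Finset.mul_sum]
  refine Finset.sum_congr rfl fun e _ => ?_
  rw [TT_succ]
  have : (1 : Fin (2 * m + 1 + 1)) = Fin.succ 0 := rfl
  simp only [this, Fin.cons_succ, Fin.cons_zero]
  ring_nf

lemma DD_succ (q : ℝ) (n : ℕ) (x : Fin (n + 1) → ℂ) :
    DD q (n + 1) x = (∏ j : Fin n, ff q (x j.succ / x 0)) * DD q n (fun i => x i.succ) := by
  unfold DD
  rw [Fin.prod_univ_succ, Fin.prod_Ioi_zero]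
  congr 1
  refine Finset.prod_congr rfl fun i _ => ?_
  rw [Fin.prod_Ioi_succ]

lemma DD_perm {q : ℝ} (hq0 : 0 < q) (hq1 : q < 1) (n : ℕ) (x : Fin n → ℂ) (hx : ∀ i, x i ≠ 0)
    (σ : Equiv.Perm (Fin n)) :
    DD q n (x ∘ σ) = ((Equiv.Perm.sign σ : ℤ) : ℂ) * DD q n x := by
  unfold DD
  exact Equiv.Perm.prod_Ioi_comp_eq_sign_mul_prod σ (f := fun i j => ff q (x j / x i))
    (fun i j => by
      rw [← ff_inv hq0 hq1 _ (div_ne_zero (hx i) (hx j)), inv_div])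

lemma prod_erase_tl {n : ℕ} (p : Fin (n + 1)) (g : Fin (n + 1) → ℂ) :
    ∏ k ∈ Finset.univ.erase p, g k = ∏ j : Fin n, g (Equiv.swap 0 p j.succ) := by
  have h1 : Finset.univ.erase p =
      Finset.univ.image (fun j : Fin n => Equiv.swap 0 p j.succ) := by
    ext k
    simp only [Finset.mem_erase, Finset.mem_univ, and_true, Finset.mem_image, true_and]
    constructor
    · intro hk
      have : Equiv.swap 0 p k ≠ 0 := by
        intro h
        apply hk
        have h2 := congrArg (Equiv.swap 0 p) h
        simpa using h2
      obtain ⟨j, hj⟩ := Fin.exists_succ_eq.2 this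
      exact ⟨j, by rw [hj]; simp⟩
    · rintro ⟨j, rfl⟩ h
      have h2 := congrArg (Equiv.swap 0 p) h
      simp at h2
  rw [h1, Finset.prod_image]
  intro a _ b _ hab
  exact Fin.succ_injective _ ((Equiv.swap 0 p).injective hab)

lemma tl_step {q : ℝ} (hq0 : 0 < q) (hq1 : q < 1) (n : ℕ) (w : Fin (n + 1) → ℂ)
    (hw : ∀ i, w i ≠ 0) (r : Fin (n + 1)) (hne : ∀ k, k ≠ r → ff q (w k / w r) ≠ 0) :
    sg r * DD q n (tl r w) = DD q (n + 1) w * ∏ k ∈ Finset.univ.erase r, ff q (-(w k / w r)) := by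
  have h1 := DD_perm hq0 hq1 (n + 1) w hw (Equiv.swap 0 r)
  rw [sg_swap, DD_succ] at h1
  simp only [Function.comp_apply, Equiv.swap_apply_left] at h1
  rw [← prod_erase_tl r (fun k => ff q (w k / w r))] at h1
  have h2 : ∏ k ∈ Finset.univ.erase r, ff q (w k / w r) ≠ 0 :=
    Finset.prod_ne_zero_iff.2 fun k hk => hne k (Finset.ne_of_mem_erase hk)
  simp only [ff_neg, Finset.prod_inv_distrib]
  rw [← div_eq_mul_inv, eq_div_iff h2]
  change _ * DD q n (tl r w) = _ at h1
  linear_combination sg r * h1 + DD q (n + 1) w * sg_sq r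

lemma th_neg_ne {q : ℝ} (hq0 : 0 < q) (hq1 : q < 1) (a b : ℂ) (ha : a ≠ 0) (hb : b ≠ 0)
    (h : ∀ l : ℤ, a / b ≠ -(q : ℂ) ^ l) : theta q (-(a / b)) ≠ 0 := by
  intro h0
  obtain ⟨l, hl⟩ := th_zero hq0 hq1 _ (neg_ne_zero.2 (div_ne_zero ha hb)) h0
  exact h l (by rw [← hl, neg_neg])

lemma inner_pf_sum {q : ℝ} (hq0 : 0 < q) (hq1 : q < 1) (m : ℕ) (y0 : ℂ) (hy0 : y0 ≠ 0)
    (w : Fin (2 * m + 1) → ℂ) (hw : ∀ i, w i ≠ 0)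
    (hp0 : ∀ i, ∀ l : ℤ, w i / y0 ≠ -(q : ℂ) ^ l)
    (hp : ∀ i j, i ≠ j → ∀ l : ℤ, w j / w i ≠ -(q : ℂ) ^ l)
    (hd : ∀ i j, i ≠ j → ∀ l : ℤ, w j ≠ (q : ℂ) ^ l * w i) :
    ∑ r, sg r * (ff q (w r / y0) * DD q (2 * m) (tl r w)) =
      (∏ j, ff q (w j / y0)) * DD q (2 * m + 1) w := by
  have h := pfrac hq0 hq1 (by simp) w hw hd y0⁻¹ (inv_ne_zero hy0)
    (fun j => by rw [← div_eq_mul_inv]; exact th_neg_ne hq0 hq1 _ _ (hw j) hy0 (hp0 j))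
  simp only [← div_eq_mul_inv] at h
  rw [← h, Finset.sum_mul]
  refine Finset.sum_congr rfl fun r _ => ?_
  have h2 := tl_step hq0 hq1 (2 * m) w hw r (fun k hk => by
    refine div_ne_zero ?_ (th_neg_ne hq0 hq1 _ _ (hw k) (hw r) (hp r k hk.symm))
    intro h0
    obtain ⟨l, hl⟩ := th_zero hq0 hq1 _ (div_ne_zero (hw k) (hw r)) h0
    exact hd r k hk.symm l ((div_eq_iff (hw r)).1 hl))
  linear_combination ff q (w r / y0) * h2

lemma neg_one_zpow_sub (a b : ℤ) : (-1 : ℂ) ^ (a - b) = (-1) ^ a * (-1) ^ b := by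
  rw [zpow_sub₀ (by norm_num)]
  rcases Int.even_or_odd b with h | h <;> simp [h.neg_one_zpow, div_neg]

lemma TT_scale {q : ℝ} (hq0 : 0 < q) (hq1 : q < 1) (m : ℕ) (y : Fin (2 * m) → ℂ)
    (hy : ∀ i, y i ≠ 0) (n : Fin (2 * m) → ℤ) :
    TT q m (fun i => (q : ℂ) ^ n i * y i) = (∏ i, (-1 : ℂ) ^ n i) * TT q m y := by
  have hqc : (q : ℂ) ≠ 0 := by exact_mod_cast hq0.ne'
  induction m with
  | zero => simp [TT]
  | succ m ih =>
    change Fin (2 * m + 1 + 1) → ℂ at y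
    change Fin (2 * m + 1 + 1) → ℤ at n
    have e := ih (fun i => y i.succ.succ) (fun i => hy _) (fun i => n i.succ.succ)
    have h1 := TT_succ q m y
    have h2 := TT_succ q m (fun i => (q : ℂ) ^ n i * y i)
    have h3 : ∏ i, (-1 : ℂ) ^ n i = (-1) ^ n 0 * ((-1) ^ n 1 * ∏ i : Fin (2 * m), (-1) ^ n i.succ.succ) := by
      rw [Fin.prod_univ_succ, Fin.prod_univ_succ]; rfl
    refine h2.trans ?_
    rw [e]
    refine Eq.trans ?_ (congrArg₂ (· * ·) h3 h1).symm
    have h4 : (q : ℂ) ^ n 1 * y 1 / ((q : ℂ) ^ n 0 * y 0) = (q : ℂ) ^ (n 1 - n 0) * (y 1 / y 0) := by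
      rw [zpow_sub₀ hqc]
      field_simp
    rw [h4, ff_zpow hq0 hq1 _ _ (div_ne_zero (hy _) (hy _)), neg_one_zpow_sub]
    ring

lemma SS_scale {q : ℝ} (hq0 : 0 < q) (hq1 : q < 1) (m : ℕ) (x : Fin (2 * m) → ℂ)
    (hx : ∀ i, x i ≠ 0) (n : Fin (2 * m) → ℤ) :
    SS q m (fun i => (q : ℂ) ^ n i * x i) = (∏ i, (-1 : ℂ) ^ n i) * SS q m x := by
  unfold SS
  rw [Finset.mul_sum]
  refine Finset.sum_congr rfl fun σ _ => ?_
  have h := TT_scale hq0 hq1 m (x ∘ σ) (fun i => hx _) (n ∘ σ)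
  have h2 : ∏ i, (-1 : ℂ) ^ (n ∘ σ) i = ∏ i, (-1 : ℂ) ^ n i :=
    Equiv.prod_comp σ (fun i => (-1 : ℂ) ^ n i)
  rw [h2] at h
  change _ * TT q m (fun i => (q : ℂ) ^ (n ∘ σ) i * (x ∘ σ) i) = _
  rw [h]
  ring

lemma SS_perm (q : ℝ) (m : ℕ) (x : Fin (2 * m) → ℂ) (τ : Equiv.Perm (Fin (2 * m))) :
    SS q m (x ∘ τ) = ((Equiv.Perm.sign τ : ℤ) : ℂ) * SS q m x := by
  unfold SS
  rw [← Equiv.sum_comp (Equiv.mulLeft τ) (fun σ => ((Equiv.Perm.sign σ : ℤ) : ℂ) * TT q m (x ∘ σ)),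
    Finset.mul_sum]
  refine Finset.sum_congr rfl fun σ _ => ?_
  simp only [Equiv.coe_mulLeft, Equiv.Perm.sign_mul, Equiv.Perm.coe_mul, ← Function.comp_assoc,
    Units.val_mul, Int.cast_mul, ← mul_assoc]
  congr 1
  rcases Int.units_eq_one_or (Equiv.Perm.sign τ) with h | h <;> simp [h]

lemma SS_degen {q : ℝ} (hq0 : 0 < q) (hq1 : q < 1) (m : ℕ) (x : Fin (2 * m) → ℂ)
    (hx : ∀ i, x i ≠ 0) (j k : Fin (2 * m)) (hjk : j ≠ k) (l : ℤ) (h : x k = (q : ℂ) ^ l * x j) :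
    SS q m x = 0 := by
  have h1 := SS_scale hq0 hq1 m x hx (fun i => if i = j then l else 0)
  set x' : Fin (2 * m) → ℂ := fun i => (q : ℂ) ^ (if i = j then l else 0) * x i with hx'
  have hj : x' j = x k := by simp [hx', h]
  have hk : x' k = x k := by simp [hx', hjk.symm]
  have h2 : x' ∘ Equiv.swap j k = x' := by
    funext i
    simp only [Function.comp_apply, Equiv.swap_apply_def]
    split_ifs with a b
    · rw [a, hj, hk]
    · rw [b, hj, hk]
    · rfl
  have h3 := SS_perm q m x' (Equiv.swap j k)
  rw [h2, Equiv.Perm.sign_swap hjk] at h3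
  have h4 : SS q m x' = 0 := by
    push_cast at h3
    have : (2 : ℂ) * SS q m x' = 0 := by linear_combination h3
    simpa using this
  rw [h4] at h1
  refine (mul_eq_zero.1 h1.symm).resolve_left ?_
  exact Finset.prod_ne_zero_iff.2 fun i _ => zpow_ne_zero _ (by norm_num)

lemma ff_qz {q : ℝ} (hq0 : 0 < q) (hq1 : q < 1) (l : ℤ) : ff q ((q : ℂ) ^ l) = 0 := by
  have := ff_zpow hq0 hq1 l 1 one_ne_zero
  rw [mul_one] at this
  rw [this, ff, th_one hq0 hq1]
  simp

lemma DD_degen {q : ℝ} (hq0 : 0 < q) (hq1 : q < 1) (n : ℕ) (x : Fin n → ℂ)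
    (hx : ∀ i, x i ≠ 0) (j k : Fin n) (hjk : j ≠ k) (l : ℤ) (h : x k = (q : ℂ) ^ l * x j) :
    DD q n x = 0 := by
  have h1 : ff q (x k / x j) = 0 := by
    rw [h, mul_div_cancel_right₀ _ (hx j), ff_qz hq0 hq1]
  have h2 : ff q (x j / x k) = 0 := by
    rw [← inv_div, ff_inv hq0 hq1 _ (div_ne_zero (hx k) (hx j)), h1, neg_zero]
  unfold DD
  rcases lt_or_gt_of_ne hjk with a | a
  · exact Finset.prod_eq_zero (Finset.mem_univ j) (Finset.prod_eq_zero (Finset.mem_Ioi.2 a) h1)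
  · exact Finset.prod_eq_zero (Finset.mem_univ k) (Finset.prod_eq_zero (Finset.mem_Ioi.2 a) h2)

lemma SS_eq {q : ℝ} (hq0 : 0 < q) (hq1 : q < 1) (m : ℕ) (x : Fin (2 * m) → ℂ)
    (hx : ∀ i, x i ≠ 0) (hp : ∀ i j, i ≠ j → ∀ l : ℤ, x j / x i ≠ -(q : ℂ) ^ l) :
    SS q m x = (2 : ℂ) ^ m * (Nat.factorial m : ℂ) * DD q (2 * m) x := by
  induction m with
  | zero => simp [SS, DD, TT]
  | succ m ih =>
    by_cases hd : ∀ i j, i ≠ j → ∀ l : ℤ, x j ≠ (q : ℂ) ^ l * x i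
    swap
    · push Not at hd
      obtain ⟨j, k, hjk, l, h⟩ := hd
      rw [SS_degen hq0 hq1 _ x hx j k hjk l h, DD_degen hq0 hq1 _ x hx j k hjk l h, mul_zero]
    change Fin (2 * m + 1 + 1) → ℂ at x
    change ∀ i : Fin (2 * m + 1 + 1), x i ≠ 0 at hx
    change ∀ i j : Fin (2 * m + 1 + 1), _ at hp
    change ∀ i j : Fin (2 * m + 1 + 1), _ at hd
    have inj : ∀ {N : ℕ} (p : Fin (N + 1)) (i j : Fin N), i ≠ j →
        Equiv.swap 0 p i.succ ≠ Equiv.swap 0 p j.succ := fun p i j hij h =>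
      hij (Fin.succ_injective _ ((Equiv.swap 0 p).injective h))
    have key : ∀ p, sg p * ∑ r, sg r * (ff q (tl p x r / x p) * SS q m (tl r (tl p x))) =
        (2 : ℂ) ^ m * (Nat.factorial m : ℂ) * DD q (2 * m + 1 + 1) x := by
      intro p
      have e1 : ∀ r, SS q m (tl r (tl p x)) =
          (2 : ℂ) ^ m * (Nat.factorial m : ℂ) * DD q (2 * m) (tl r (tl p x)) := fun r =>
        ih _ (fun i => hx _) (fun i j hij l => hp _ _ (inj p _ _ (inj r _ _ hij)) l)
      have e2 := inner_pf_sum hq0 hq1 m (x p) (hx p) (tl p x) (fun i => hx _)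
        (fun i l => hp _ _ (fun h => by
          have h2 := congrArg (Equiv.swap 0 p) h
          simp at h2
          exact Fin.succ_ne_zero i h2.symm) l)
        (fun i j hij l => hp _ _ (inj p _ _ hij) l)
        (fun i j hij l => hd _ _ (inj p _ _ hij) l)
      have e3 := DD_perm hq0 hq1 _ x hx (Equiv.swap 0 p)
      rw [sg_swap, DD_succ] at e3
      simp only [Function.comp_apply, Equiv.swap_apply_left] at e3
      change (∏ j, ff q (tl p x j / x p)) * DD q (2 * m + 1) (tl p x) = _ at e3
      rw [e3] at e2
      have e4 : ∑ r, sg r * (ff q (tl p x r / x p) * SS q m (tl r (tl p x))) =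
          (2 : ℂ) ^ m * (Nat.factorial m : ℂ) *
            ∑ r, sg r * (ff q (tl p x r / x p) * DD q (2 * m) (tl r (tl p x))) := by
        rw [Finset.mul_sum]
        refine Finset.sum_congr rfl fun r _ => ?_
        rw [e1]; ring
      rw [e4, e2]
      linear_combination (2 : ℂ) ^ m * (Nat.factorial m : ℂ) * DD q (2 * m + 1 + 1) x * sg_sq p
    refine (SS_succ q m x).trans ?_
    rw [Finset.sum_congr rfl fun p _ => key p, Finset.sum_const, Finset.card_univ,
      Fintype.card_fin, nsmul_eq_mul, Nat.factorial_succ, pow_succ]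
    change _ = _ * DD q (2 * m + 1 + 1) x
    push_cast
    ring

lemma pfaff_eq (q : ℝ) (m M : ℕ) (hM : M = m) (x : Fin (2 * m) → ℂ) (σ : Equiv.Perm (Fin (2 * m))) :
    (∏ i : Fin M, ff q (x (σ ⟨2 * (i : ℕ) + 1, by have := i.isLt; omega⟩) /
      x (σ ⟨2 * (i : ℕ), by have := i.isLt; omega⟩))) = TT q m (x ∘ σ) := by
  subst hM
  rfl

/-- The even elliptic pfaffian evaluation:
`pfaff(θ(x_j/x_i)/θ(−x_j/x_i)) = Π_{i<j} θ(x_j/x_i)/θ(−x_j/x_i)` for `2m` variables. -/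
theorem elliptic_pfaffian_even (q : ℝ) (hq0 : 0 < q) (hq1 : q < 1) (m : ℕ) (hm : 1 ≤ m)
    (x : Fin (2 * m) → ℂ) (hx0 : ∀ i, x i ≠ 0)
    (hθ : ∀ i j, i ≠ j → ∀ l : ℤ, x j / x i ≠ -(q : ℂ) ^ l) :
    pfaff (2 * m) (Matrix.of fun i j => theta q (x j / x i) / theta q (-(x j / x i))) =
      ∏ i : Fin (2 * m), ∏ j ∈ Finset.Ioi i,
        theta q (x j / x i) / theta q (-(x j / x i)) := by

  have hmm : 2 * m / 2 = m := by omega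
  have h := SS_eq hq0 hq1 m x hx0 hθ
  change _ = DD q (2 * m) x
  have h1 : pfaff (2 * m) (Matrix.of fun i j => theta q (x j / x i) / theta q (-(x j / x i))) =
      (1 / ((2 : ℂ) ^ (2 * m / 2) * (Nat.factorial (2 * m / 2) : ℂ))) * SS q m x := by
    unfold pfaff SS
    congr 1
    refine Finset.sum_congr rfl fun σ _ => ?_
    rw [← pfaff_eq q m (2 * m / 2) hmm x σ]
    rfl
  rw [h1, h, hmm]
  have : (Nat.factorial m : ℂ) ≠ 0 := by exact_mod_cast Nat.factorial_ne_zero m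
  field_simp
end

section
/- Let 0 < q < 1, let m ≥ 0, and let x_1,…,x_{2m+1} be nonzero complex numbers such that for all i ≠ j, x_j/x_i ≠ −q^l for every l ∈ ℤ (so that θ(−x_j/x_i;q) ≠ 0). Then pfaff_{1≤i,j≤2m+1}(1 + 2·(x_j/x_i)·θ'(−x_j/x_i;q)/θ(−x_j/x_i;q)) = ((q;q)_∞/(−q;q)_∞)^{2m} · Π_{1≤i<j≤2m+1} θ(x_j/x_i;q)/θ(−x_j/x_i;q). -/
set_option linter.unusedSectionVars false
set_option linter.unusedVariables false

/-- Abstract relations used for the pfaffian evaluation. -/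
structure GoodPair {ι : Type*} (f h : ι → ι → ℂ) (C : ℂ) : Prop where
  anti : ∀ i j, h j i = - h i j
  ne : ∀ i j, i ≠ j → h i j ≠ 0
  r1 : ∀ i j k l, i ≠ j → i ≠ k → j ≠ k → l ≠ i → l ≠ j → l ≠ k →
    h i j * h l k - h i k * h l j + h j k * h l i
      = h i j * h i k * h j k * h l i * h l j * h l k
  r2 : ∀ i j k l, i ≠ j → i ≠ k → j ≠ k → l ≠ i → l ≠ j → l ≠ k →
    h i j * (h l k)⁻¹ - h i k * (h l j)⁻¹ + h j k * (h l i)⁻¹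
      = h i j * h i k * h j k * (h l i)⁻¹ * (h l j)⁻¹ * (h l k)⁻¹
  r3 : ∀ i j k, f i j - f i k + f j k = C * (h i j * h i k * h j k)

namespace GoodPair

variable {ι : Type*} [DecidableEq ι] {f h : ι → ι → ℂ} {C : ℂ}

lemma diag (g : GoodPair f h C) (i : ι) : h i i = 0 := by
  have := g.anti i i
  linear_combination this / 2

lemma comap {κ : Type*} (g : GoodPair f h C) (e : κ → ι) (he : Function.Injective e) :
    GoodPair (fun i j => f (e i) (e j)) (fun i j => h (e i) (e j)) C where
  anti i j := g.anti _ _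
  ne i j hij := g.ne _ _ (he.ne hij)
  r1 i j k l h1 h2 h3 h4 h5 h6 :=
    g.r1 _ _ _ _ (he.ne h1) (he.ne h2) (he.ne h3) (he.ne h4) (he.ne h5) (he.ne h6)
  r2 i j k l h1 h2 h3 h4 h5 h6 :=
    g.r2 _ _ _ _ (he.ne h1) (he.ne h2) (he.ne h3) (he.ne h4) (he.ne h5) (he.ne h6)
  r3 i j k := g.r3 _ _ _

lemma lemA (g : GoodPair f h C) (m : ℕ) : ∀ (s : Finset ι) (p : ι → ℂ), s.card = 2 * m + 1 →
    (∀ i ∈ s, ∀ j ∈ s, ∀ k ∈ s, i ≠ j → i ≠ k → j ≠ k →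
      h i j * p k - h i k * p j + h j k * p i = h i j * h i k * h j k * p i * p j * p k) →
    ∏ i ∈ s, p i = ∑ k ∈ s, p k * ∏ i ∈ s.erase k, (h k i)⁻¹ := by
  induction m with
  | zero =>
    intro s p hs _
    obtain ⟨a, rfl⟩ := Finset.card_eq_one.mp (by simpa using hs)
    simp
  | succ m ih =>
    intro s p hs hp
    obtain ⟨a, s', ha, rfl, hs'⟩ := Finset.card_eq_succ.mp hs
    obtain ⟨b, t, hb, rfl, ht⟩ := Finset.card_eq_succ.mp (show s'.card = (2 * m + 1) + 1 by omega)
    have hab : a ≠ b := by rintro rfl; simp at ha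
    have hat : a ∉ t := by intro h'; simp [h'] at ha
    have hka : ∀ k ∈ t, k ≠ a := fun k hk h' => hat (h' ▸ hk)
    have hkb : ∀ k ∈ t, k ≠ b := fun k hk h' => hb (h' ▸ hk)
    have ihp := ih t p ht (fun i hi j hj k hk => hp i (by simp [hi]) j (by simp [hj]) k (by simp [hk]))
    have iha := ih t (fun i => (h a i)⁻¹) ht (fun i hi j hj k hk h1 h2 h3 =>
      g.r2 i j k a h1 h2 h3 (hka i hi).symm (hka j hj).symm (hka k hk).symm)
    have ihb := ih t (fun i => (h b i)⁻¹) ht (fun i hi j hj k hk h1 h2 h3 =>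
      g.r2 i j k b h1 h2 h3 (hkb i hi).symm (hkb j hj).symm (hkb k hk).symm)
    rw [Finset.sum_insert ha, Finset.sum_insert hb, Finset.prod_insert ha, Finset.prod_insert hb,
      Finset.erase_insert ha, Finset.prod_insert hb]
    have e1 : (insert a (insert b t)).erase b = insert a t := by
      ext x; simp only [Finset.mem_erase, Finset.mem_insert]; grind
    rw [e1, Finset.prod_insert hat, iha, ihb, ihp]
    have e2 : ∀ k ∈ t, p k * ∏ i ∈ (insert a (insert b t)).erase k, (h k i)⁻¹
        = p k * ((h k a)⁻¹ * ((h k b)⁻¹ * ∏ i ∈ t.erase k, (h k i)⁻¹)) := by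
      intro k hk
      have : (insert a (insert b t)).erase k = insert a (insert b (t.erase k)) := by
        ext x; simp only [Finset.mem_erase, Finset.mem_insert]
        have := hka k hk; have := hkb k hk; grind
      rw [this, Finset.prod_insert (by simp [hab, hat]), Finset.prod_insert (by simp [hb])]
    rw [Finset.sum_congr rfl e2]
    simp only [Finset.mul_sum]
    rw [← Finset.sum_add_distrib, ← Finset.sum_add_distrib]
    refine Finset.sum_congr rfl fun k hk => ?_
    have r := hp k (by simp [hk]) a (by simp) b (by simp) (hka k hk) (hkb k hk) hab
    have n1 := g.ne _ _ (hka k hk)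
    have n2 := g.ne _ _ (hkb k hk)
    have n3 := g.ne _ _ hab
    have key : p a * (p b * p k) = p a * ((h a b)⁻¹ * (h a k)⁻¹) + p b * ((h b a)⁻¹ * (h b k)⁻¹)
        + p k * ((h k a)⁻¹ * (h k b)⁻¹) := by
      rw [g.anti k a, g.anti k b, g.anti a b]
      field_simp
      linear_combination -r
    linear_combination (∏ i ∈ t.erase k, (h k i)⁻¹) * key

lemma lemE (g : GoodPair f h C) (m : ℕ) (t : Finset ι) (a : ι) (ha : a ∉ t)
    (ht : t.card = 2 * m + 1) :
    ∑ b ∈ t, ∏ i ∈ t.erase b, (h a i * h b i)⁻¹ = 1 := by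
  have hne : ∀ k ∈ t, a ≠ k := fun k hk h' => ha (h' ▸ hk)
  have := g.lemA m t (fun i => h a i) ht (fun i hi j hj k hk h1 h2 h3 =>
      g.r1 i j k a h1 h2 h3 (hne i hi) (hne j hj) (hne k hk))
  have h0 : ∏ i ∈ t, h a i ≠ 0 := Finset.prod_ne_zero_iff.mpr fun i hi => g.ne _ _ (hne i hi)
  apply mul_left_cancel₀ h0
  rw [mul_one, Finset.mul_sum]
  conv_rhs => rw [this]
  refine Finset.sum_congr rfl fun b hb => ?_
  rw [← Finset.mul_prod_erase t _ hb]
  simp only [mul_inv, Finset.prod_mul_distrib, Finset.prod_inv_distrib]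
  have h1 : ∏ i ∈ t.erase b, h a i ≠ 0 :=
    Finset.prod_ne_zero_iff.mpr fun i hi => g.ne _ _ (hne i (Finset.mem_of_mem_erase hi))
  field_simp

lemma lemZ (g : GoodPair f h C) (m : ℕ) (t : Finset ι) (ht : t.card = 2 * m + 2) :
    ∑ b ∈ t, ∏ i ∈ t.erase b, (h b i)⁻¹ = 0 := by
  obtain ⟨a, s, ha, rfl, hs⟩ := Finset.card_eq_succ.mp ht
  have hne : ∀ k ∈ s, a ≠ k := fun k hk h' => ha (h' ▸ hk)
  have := g.lemA m s (fun i => (h a i)⁻¹) hs (fun i hi j hj k hk h1 h2 h3 =>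
      g.r2 i j k a h1 h2 h3 (hne i hi) (hne j hj) (hne k hk))
  rw [Finset.sum_insert ha, Finset.erase_insert ha, this, ← Finset.sum_add_distrib]
  refine Finset.sum_eq_zero fun b hb => ?_
  rw [Finset.erase_insert_of_ne (hne b hb), Finset.prod_insert (by simp [ha]), g.anti a b, inv_neg]
  ring

/-- weights -/
noncomputable def w [Fintype ι] (h : ι → ι → ℂ) (a b : ι) : ℂ :=
  (h a b)⁻¹ * ∏ i ∈ (Finset.univ.erase a).erase b, (h a i * h b i)⁻¹

lemma w_anti [Fintype ι] (g : GoodPair f h C) (a b : ι) : w h b a = - w h a b := by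
  unfold w
  rw [g.anti a b, Finset.erase_right_comm, inv_neg]
  simp only [mul_comm (h a _) (h b _)]
  ring

lemma w_row [Fintype ι] (g : GoodPair f h C) (m : ℕ) (hc : Fintype.card ι = 2 * m + 3) (a : ι) :
    ∑ b, w h a b = 0 := by
  have hz := g.lemZ m (Finset.univ.erase a) (by
    rw [Finset.card_erase_of_mem (Finset.mem_univ _), Finset.card_univ, hc]; omega)
  have h0 : w h a a = 0 := by simp [w, g.diag]
  rw [← Finset.add_sum_erase _ _ (Finset.mem_univ a), h0, zero_add]
  rw [← mul_zero (∏ i ∈ Finset.univ.erase a, (h a i)⁻¹), ← hz, Finset.mul_sum]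
  refine Finset.sum_congr rfl fun b hb => ?_
  rw [← Finset.mul_prod_erase _ _ hb]
  simp only [w, mul_inv, Finset.prod_mul_distrib]
  ring

lemma lemL [Fintype ι] (g : GoodPair f h C) (m : ℕ) (hc : Fintype.card ι = 2 * m + 3) :
    ∑ a, ∑ b, f a b * w h a b = (2 * m + 2) * C := by
  have hpos : 0 < Fintype.card ι := by omega
  obtain ⟨c⟩ := Fintype.card_pos_iff.mp hpos
  have z1 : ∑ a, ∑ b, f a c * w h a b = 0 := by
    simp [← Finset.mul_sum, g.w_row m hc]
  have z2 : ∑ a, ∑ b, f b c * w h a b = 0 := by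
    rw [Finset.sum_comm]
    refine Finset.sum_eq_zero fun b _ => ?_
    rw [← Finset.mul_sum, Finset.sum_congr rfl (fun a _ => g.w_anti b a), Finset.sum_neg_distrib,
      g.w_row m hc, neg_zero, mul_zero]
  have e1 : ∑ a, ∑ b, f a b * w h a b
      = ∑ a, ∑ b, C * (h a b * h a c * h b c * w h a b) := by
    rw [← sub_zero (∑ a, ∑ b, f a b * w h a b), ← z1, ← add_zero (_ - _), ← z2,
      ← Finset.sum_sub_distrib, ← Finset.sum_add_distrib]
    refine Finset.sum_congr rfl fun a _ => ?_
    rw [← Finset.sum_sub_distrib, ← Finset.sum_add_distrib]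
    refine Finset.sum_congr rfl fun b _ => ?_
    linear_combination w h a b * g.r3 a b c
  rw [e1]
  simp only [← Finset.mul_sum]
  have e2 : ∀ a ∈ Finset.univ.erase c, ∑ b, h a b * h a c * h b c * w h a b = 1 := by
    intro a ha
    have hac : a ≠ c := Finset.ne_of_mem_erase ha
    rw [← g.lemE m ((Finset.univ.erase a).erase c) a (by simp) (by
      rw [Finset.card_erase_of_mem (by simp [hac.symm]),
        Finset.card_erase_of_mem (Finset.mem_univ _), Finset.card_univ, hc]; omega)]
    rw [← Finset.add_sum_erase _ _ (Finset.mem_univ a), g.diag a,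
      ← Finset.add_sum_erase _ _ (show c ∈ Finset.univ.erase a by simp [hac.symm]), g.diag c]
    simp only [zero_mul, mul_zero, zero_add]
    refine Finset.sum_congr rfl fun b hb => ?_
    simp only [Finset.mem_erase, Finset.mem_univ, and_true] at hb
    unfold w
    have hcm : c ∈ (Finset.univ.erase a).erase b := by simp [hac.symm, hb.1.symm]
    rw [← Finset.mul_prod_erase _ _ hcm, Finset.erase_right_comm]
    have n1 := g.ne _ _ hac
    have n2 := g.ne _ _ hb.1
    have n3 := g.ne _ _ hb.2.symm
    field_simp
  rw [← Finset.add_sum_erase _ _ (Finset.mem_univ c), Finset.sum_congr rfl e2]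
  simp only [g.diag, mul_zero, zero_mul, Finset.sum_const_zero, Finset.sum_const, zero_add,
    Finset.card_erase_of_mem (Finset.mem_univ c), Finset.card_univ, hc]
  push_cast [show 2 * m + 3 - 1 = 2 * m + 2 by omega]
  simp
  ring

end GoodPair

lemma ss_ne_one {n : ℕ} (i : Fin n) : i.succ.succ ≠ 1 := by
  intro h
  have := congrArg Fin.val h
  simp at this

/-- alternating sum -/
noncomputable def altS (m n : ℕ) (hn : 2 * m ≤ n) (A : Fin n → Fin n → ℂ) : ℂ :=
  ∑ σ : Equiv.Perm (Fin n), ((Equiv.Perm.sign σ : ℤ) : ℂ) *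
      ∏ i : Fin m, A (σ ⟨2 * (i : ℕ), by have := i.isLt; omega⟩)
          (σ ⟨2 * (i : ℕ) + 1, by have := i.isLt; omega⟩)

lemma pfaff_eq_altS (m : ℕ) (A : Fin (2 * m + 1) → Fin (2 * m + 1) → ℂ) :
    pfaff (2 * m + 1) (Matrix.of A)
      = (1 / ((2 : ℂ) ^ m * (Nat.factorial m : ℂ))) * altS m (2 * m + 1) (by omega) A := by
  have h : (2 * m + 1) / 2 = m := by omega
  unfold pfaff altS
  refine congrArg₂ (· * ·) (by rw [h]) ?_
  refine Finset.sum_congr rfl fun σ _ => ?_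
  refine congrArg₂ (· * ·) rfl ?_
  exact Fintype.prod_equiv (finCongr h) _ _ (fun i => rfl)

lemma sum_perm_one (n : ℕ) (φ : Fin (n + 1) → ℂ) :
    ∑ σ : Equiv.Perm (Fin (n + 1)), φ (σ 0) = (n.factorial : ℂ) * ∑ a, φ a := by
  rw [← Equiv.sum_comp Equiv.Perm.decomposeFin.symm, Fintype.sum_prod_type]
  simp [Fintype.card_perm, Finset.mul_sum]

lemma sum_perm_two (n : ℕ) (G : Fin (n + 2) → Fin (n + 2) → ℂ) (hG : ∀ a, G a a = 0) :
    ∑ σ : Equiv.Perm (Fin (n + 2)), G (σ 0) (σ 1) = (n.factorial : ℂ) * ∑ a, ∑ b, G a b := by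
  rw [← Equiv.sum_comp Equiv.Perm.decomposeFin.symm, Fintype.sum_prod_type, Finset.mul_sum]
  refine Finset.sum_congr rfl fun p _ => ?_
  have h1 : ∀ τ : Equiv.Perm (Fin (n + 1)),
      G (Equiv.Perm.decomposeFin.symm (p, τ) 0) (Equiv.Perm.decomposeFin.symm (p, τ) 1)
      = G p (Equiv.swap 0 p (τ 0).succ) := by
    intro τ
    rw [Equiv.Perm.decomposeFin_symm_apply_zero, Equiv.Perm.decomposeFin_symm_apply_one]
  rw [Finset.sum_congr rfl (fun τ _ => h1 τ), sum_perm_one n (fun b => G p (Equiv.swap 0 p b.succ)),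
    ← Equiv.sum_comp (Equiv.swap 0 p) (G p), Fin.sum_univ_succ (fun i => G p (Equiv.swap 0 p i))]
  simp [hG]

/-- embedding of permutations fixing 0 and 1 -/
def hatPerm {n : ℕ} (τ : Equiv.Perm (Fin n)) : Equiv.Perm (Fin (n + 2)) :=
  Equiv.Perm.decomposeFin.symm (0, Equiv.Perm.decomposeFin.symm (0, τ))

lemma hatPerm_zero {n : ℕ} (τ : Equiv.Perm (Fin n)) : hatPerm τ 0 = 0 := by
  simp [hatPerm]

lemma hatPerm_one {n : ℕ} (τ : Equiv.Perm (Fin n)) : hatPerm τ 1 = 1 := by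
  simp [hatPerm]

lemma hatPerm_ss {n : ℕ} (τ : Equiv.Perm (Fin n)) (i : Fin n) :
    hatPerm τ i.succ.succ = (τ i).succ.succ := by
  simp [hatPerm]

lemma hatPerm_sign {n : ℕ} (τ : Equiv.Perm (Fin n)) :
    Equiv.Perm.sign (hatPerm τ) = Equiv.Perm.sign τ := by
  simp [hatPerm]

lemma altS_succ (m n : ℕ) (hn : 2 * m ≤ n) (A : Fin (n + 2) → Fin (n + 2) → ℂ) :
    (n.factorial : ℂ) * altS (m + 1) (n + 2) (by omega) A
      = ∑ σ : Equiv.Perm (Fin (n + 2)), ((Equiv.Perm.sign σ : ℤ) : ℂ) * (A (σ 0) (σ 1) *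
        altS m n hn (fun i j => A (σ i.succ.succ) (σ j.succ.succ))) := by
  have h1 : ∀ τ : Equiv.Perm (Fin n), altS (m + 1) (n + 2) (by omega) A =
      ∑ σ : Equiv.Perm (Fin (n + 2)), ((Equiv.Perm.sign σ : ℤ) : ℂ) * (A (σ 0) (σ 1) *
        (((Equiv.Perm.sign τ : ℤ) : ℂ) * ∏ i : Fin m,
          A (σ (τ ⟨2 * (i : ℕ), by have := i.isLt; omega⟩).succ.succ)
          (σ (τ ⟨2 * (i : ℕ) + 1, by have := i.isLt; omega⟩).succ.succ))) := by
    intro τ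
    unfold altS
    rw [← Equiv.sum_comp (Equiv.mulRight (hatPerm τ))]
    refine Finset.sum_congr rfl fun σ _ => ?_
    rw [Fin.prod_univ_succ]
    simp only [Equiv.coe_mulRight, Equiv.Perm.mul_apply, Equiv.Perm.sign_mul, hatPerm_sign]
    have e0 : hatPerm τ ⟨2 * ((0 : Fin (m + 1)) : ℕ), by simp⟩ = 0 := hatPerm_zero τ
    have e1 : hatPerm τ ⟨2 * ((0 : Fin (m + 1)) : ℕ) + 1, by simp⟩ = 1 := hatPerm_one τ
    rw [e0, e1]
    push_cast
    rw [mul_assoc, mul_left_comm (A _ _)]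
    congr 3
  have h2 : (n.factorial : ℂ) * altS (m + 1) (n + 2) (by omega) A
      = ∑ τ : Equiv.Perm (Fin n), altS (m + 1) (n + 2) (by omega) A := by
    simp [Fintype.card_perm]
  rw [h2, Finset.sum_congr rfl (fun τ _ => h1 τ), Finset.sum_comm]
  refine Finset.sum_congr rfl fun σ _ => ?_
  rw [← Finset.mul_sum, ← Finset.mul_sum]
  rfl

/-- Vandermonde like product -/
noncomputable def vd (n : ℕ) (h : Fin n → Fin n → ℂ) : ℂ := ∏ i, ∏ j ∈ Finset.Ioi i, h i j

lemma vd_succ2 (n : ℕ) (h : Fin (n + 2) → Fin (n + 2) → ℂ) :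
    vd (n + 2) h = h 0 1 * (∏ i : Fin n, (h 0 i.succ.succ * h 1 i.succ.succ)) *
      vd n (fun i j => h i.succ.succ j.succ.succ) := by
  unfold vd
  rw [Fin.prod_univ_succ, Fin.prod_univ_succ]
  simp only [Fin.prod_Ioi_zero, Fin.prod_Ioi_succ, Fin.prod_univ_succ (n := n), Finset.prod_mul_distrib]
  simp only [Fin.succ_zero_eq_one]
  ring

lemma w_perm {ι : Type*} [DecidableEq ι] [Fintype ι] (h : ι → ι → ℂ) (σ : Equiv.Perm ι) (a b : ι) :
    GoodPair.w h (σ a) (σ b) = GoodPair.w (fun i j => h (σ i) (σ j)) a b := by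
  unfold GoodPair.w
  congr 1
  symm
  refine Finset.prod_equiv σ ?_ ?_
  · intro i; simp
  · intro i _; rfl

lemma w_zero_one (n : ℕ) (h : Fin (n + 2) → Fin (n + 2) → ℂ) :
    GoodPair.w h 0 1 = (h 0 1 * (∏ i : Fin n, (h 0 i.succ.succ * h 1 i.succ.succ)))⁻¹ := by
  unfold GoodPair.w
  rw [mul_inv, ← Finset.prod_inv_distrib]
  congr 1
  have : (Finset.univ.erase (0 : Fin (n + 2))).erase 1
      = Finset.univ.map ((Fin.succEmb n).trans (Fin.succEmb (n + 1))) := by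
    ext i
    refine Fin.cases ?_ (fun i => ?_) i
    · simp [Fin.succ_ne_zero]
    · refine Fin.cases ?_ (fun i => ?_) i
      · simpa using fun x => ss_ne_one x
      · simp [Fin.ext_iff]
  rw [this, Finset.prod_map]
  rfl

lemma altS_good (C : ℂ) (m : ℕ) : ∀ (f h : Fin (2 * m + 1) → Fin (2 * m + 1) → ℂ),
    GoodPair f h C → altS m (2 * m + 1) (by omega) f
      = 2 ^ m * (m.factorial : ℂ) * C ^ m * vd (2 * m + 1) h := by
  induction m with
  | zero =>
    intro f h _
    simp [altS, vd]
  | succ m ih =>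
    intro f h g
    change altS (m + 1) ((2 * m + 1) + 2) _ f = _ * vd ((2 * m + 1) + 2) h
    change Fin ((2 * m + 1) + 2) → Fin ((2 * m + 1) + 2) → ℂ at f h
    have hf : (((2 * m + 1).factorial : ℕ) : ℂ) ≠ 0 := by
      exact_mod_cast Nat.factorial_ne_zero _
    apply mul_left_cancel₀ hf
    rw [altS_succ m (2 * m + 1) (by omega)]
    have key : ∀ σ : Equiv.Perm (Fin ((2 * m + 1) + 2)), ((Equiv.Perm.sign σ : ℤ) : ℂ) *
        (f (σ 0) (σ 1) * altS m (2 * m + 1) (by omega) (fun i j => f (σ i.succ.succ) (σ j.succ.succ)))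
        = 2 ^ m * (m.factorial : ℂ) * C ^ m * vd ((2 * m + 1) + 2) h *
          (f (σ 0) (σ 1) * GoodPair.w h (σ 0) (σ 1)) := by
      intro σ
      have g' := g.comap (fun i : Fin (2 * m + 1) => σ i.succ.succ)
        (σ.injective.comp ((Fin.succ_injective _).comp (Fin.succ_injective _)))
      rw [ih _ _ g', w_perm, w_zero_one]
      have hv : vd ((2 * m + 1) + 2) (fun i j => h (σ i) (σ j))
          = ((Equiv.Perm.sign σ : ℤ) : ℂ) * vd ((2 * m + 1) + 2) h := by
        unfold vd
        exact σ.prod_Ioi_comp_eq_sign_mul_prod (fun i j => by rw [g.anti j i])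
      have hs : ((Equiv.Perm.sign σ : ℤ) : ℂ) * ((Equiv.Perm.sign σ : ℤ) : ℂ) = 1 := by
        rcases Int.units_eq_one_or (Equiv.Perm.sign σ) with h | h <;> simp [h]
      have hv2 : vd ((2 * m + 1) + 2) h
          = ((Equiv.Perm.sign σ : ℤ) : ℂ) * vd ((2 * m + 1) + 2) (fun i j => h (σ i) (σ j)) := by
        rw [hv, ← mul_assoc, hs, one_mul]
      rw [hv2, vd_succ2]
      have n0 : h (σ 0) (σ 1) * (∏ i : Fin (2 * m + 1),
          (h (σ 0) (σ i.succ.succ) * h (σ 1) (σ i.succ.succ))) ≠ 0 := by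
        refine mul_ne_zero (g.ne _ _ (σ.injective.ne (by simp)))
          (Finset.prod_ne_zero_iff.mpr fun i _ => mul_ne_zero
            (g.ne _ _ (σ.injective.ne (Fin.succ_ne_zero _).symm))
            (g.ne _ _ (σ.injective.ne (ss_ne_one i).symm)))
      generalize h (σ 0) (σ 1) * (∏ i : Fin (2 * m + 1),
          (h (σ 0) (σ i.succ.succ) * h (σ 1) (σ i.succ.succ))) = W at n0 ⊢
      field_simp
    have hL : ∑ a : Fin ((2 * m + 1) + 2), ∑ b : Fin ((2 * m + 1) + 2), f a b * GoodPair.w h a b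
        = (2 * m + 2) * C := g.lemL m (by rw [Fintype.card_fin]; ring)
    rw [Finset.sum_congr rfl (fun σ _ => key σ), ← Finset.mul_sum,
      sum_perm_two (2 * m + 1) (fun a b => f a b * GoodPair.w h a b)
        (fun a => by simp [GoodPair.w, g.diag]),
      hL]
    rw [Nat.factorial_succ m]
    push_cast
    ring

lemma pfaff_good (C : ℂ) (m : ℕ) (f h : Fin (2 * m + 1) → Fin (2 * m + 1) → ℂ)
    (g : GoodPair f h C) : pfaff (2 * m + 1) (Matrix.of f) = C ^ m * vd (2 * m + 1) h := by
  rw [pfaff_eq_altS, altS_good C m f h g]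
  have hf : ((m.factorial : ℕ) : ℂ) ≠ 0 := by
    exact_mod_cast Nat.factorial_ne_zero _
  field_simp

section ThetaBasics

variable {q : ℝ}

lemma norm_q_lt (hq0 : 0 < q) (hq1 : q < 1) : ‖(q : ℂ)‖ < 1 := by
  simpa [abs_of_pos hq0] using hq1

lemma qPoch_summable (hq0 : 0 < q) (hq1 : q < 1) (a : ℂ) :
    Summable fun k : ℕ => ‖-(a * (q : ℂ) ^ k)‖ := by
  simp only [norm_neg, norm_mul, norm_pow]
  exact (summable_geometric_of_lt_one (norm_nonneg _) (norm_q_lt hq0 hq1)).mul_left _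

lemma qPoch_multipliable (hq0 : 0 < q) (hq1 : q < 1) (a : ℂ) :
    Multipliable fun k : ℕ => (1 - a * (q : ℂ) ^ k) := by
  simpa [sub_eq_add_neg] using multipliable_one_add_of_summable (qPoch_summable hq0 hq1 a)

lemma qPoch_step (hq0 : 0 < q) (hq1 : q < 1) (a : ℂ) :
    qPoch q a = (1 - a) * qPoch q (a * q) := by
  unfold qPoch
  rw [tprod_eq_zero_mul']
  · simp only [pow_zero, mul_one]
    congr 1
    refine tprod_congr fun k => ?_
    ring
  · refine (qPoch_multipliable hq0 hq1 (a * q)).congr fun k => ?_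
    ring

lemma qPoch_ne_zero (hq0 : 0 < q) (hq1 : q < 1) (a : ℂ) (h : ∀ k : ℕ, a * (q : ℂ) ^ k ≠ 1) :
    qPoch q a ≠ 0 := by
  unfold qPoch
  simp only [sub_eq_add_neg]
  exact tprod_one_add_ne_zero_of_summable (f := fun k => -(a * (q : ℂ) ^ k))
    (fun k => by
      rw [← sub_eq_add_neg]
      exact sub_ne_zero.mpr (h k).symm) (qPoch_summable hq0 hq1 a)

lemma qPoch_differentiable (hq0 : 0 < q) (hq1 : q < 1) : Differentiable ℂ (qPoch q) := by
  have key : ∀ R : ℝ, DifferentiableOn ℂ (qPoch q) (Metric.ball 0 R) := by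
    intro R
    have hu : Summable fun k : ℕ => R * ‖(q : ℂ)‖ ^ k :=
      (summable_geometric_of_lt_one (norm_nonneg _) (norm_q_lt hq0 hq1)).mul_left _
    have hp := Summable.hasProdLocallyUniformlyOn_nat_one_add (K := Metric.ball (0 : ℂ) R)
      (f := fun k a => -(a * (q : ℂ) ^ k))
      Metric.isOpen_ball hu (.of_forall fun n x hx => by
        simp only [norm_neg, norm_mul, norm_pow]
        have : ‖x‖ ≤ R := by simpa using (Metric.mem_ball.mp hx).le
        gcongr) (fun n => by fun_prop)
    have := hp.differentiableOn
      (.of_forall fun _ ↦ by simpa [Finset.prod_fn] using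
        DifferentiableOn.finsetProd (fun _ _ ↦ by fun_prop)) Metric.isOpen_ball
    simp only [← sub_eq_add_neg] at this
    exact this
  intro a
  exact (key (‖a‖ + 1)).differentiableAt (Metric.isOpen_ball.mem_nhds (by simp))

lemma theta_eq (hq0 : 0 < q) (hq1 : q < 1) (x : ℂ) :
    theta q x = (1 - x) * (qPoch q (x * q) * qPoch q (q / x)) := by
  rw [theta, qPoch_step hq0 hq1 x]; ring

lemma theta_inv (hq0 : 0 < q) (hq1 : q < 1) (x : ℂ) (hx : x ≠ 0) :
    theta q (x⁻¹) = - theta q x / x := by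
  rw [theta_eq hq0 hq1, theta_eq hq0 hq1]
  rw [div_inv_eq_mul, mul_comm (q : ℂ) x, inv_mul_eq_div]
  field_simp
  ring

lemma theta_one (hq0 : 0 < q) (hq1 : q < 1) : theta q 1 = 0 := by
  rw [theta_eq hq0 hq1]; simp

lemma theta_neg_one (hq0 : 0 < q) (hq1 : q < 1) : theta q (-1) = 2 * qPoch q (-q) ^ 2 := by
  rw [theta_eq hq0 hq1]
  simp only [neg_mul, one_mul, div_neg, div_one]
  ring

lemma theta_ne_zero (hq0 : 0 < q) (hq1 : q < 1) (x : ℂ) (hx : x ≠ 0)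
    (h : ∀ l : ℤ, x ≠ (q : ℂ) ^ l) : theta q x ≠ 0 := by
  have hq : (q : ℂ) ≠ 0 := by exact_mod_cast hq0.ne'
  refine mul_ne_zero (qPoch_ne_zero hq0 hq1 _ ?_) (qPoch_ne_zero hq0 hq1 _ ?_)
  · intro k hk
    apply h (-(k : ℤ))
    rw [zpow_neg, zpow_natCast]
    exact eq_inv_of_mul_eq_one_left hk
  · intro k hk
    apply h ((k : ℤ) + 1)
    rw [zpow_add_one₀ hq, zpow_natCast]
    field_simp at hk
    rw [← hk]; ring

lemma theta_neg_one_ne (hq0 : 0 < q) (hq1 : q < 1) : theta q (-1) ≠ 0 := by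
  refine theta_ne_zero hq0 hq1 _ (by norm_num) ?_
  intro l hl
  have : (-1 : ℝ) = q ^ l := by exact_mod_cast hl
  have := zpow_pos hq0 l
  linarith

lemma qPoch_neg_q_ne (hq0 : 0 < q) (hq1 : q < 1) : qPoch q (-q) ≠ 0 := by
  have := theta_neg_one_ne hq0 hq1
  rw [theta_neg_one hq0 hq1] at this
  intro h
  simp [h] at this

lemma qPoch_q_ne (hq0 : 0 < q) (hq1 : q < 1) : qPoch q q ≠ 0 := by
  refine qPoch_ne_zero hq0 hq1 _ fun k hk => ?_
  have h1 : q * q ^ k = 1 := by exact_mod_cast hk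
  rw [← pow_succ'] at h1
  have := pow_lt_one₀ hq0.le hq1 (Nat.succ_ne_zero k)
  exact this.ne h1

lemma theta_differentiableAt (hq0 : 0 < q) (hq1 : q < 1) (x : ℂ) (hx : x ≠ 0) :
    DifferentiableAt ℂ (theta q) x := by
  have hd := qPoch_differentiable hq0 hq1
  have h2 : DifferentiableAt ℂ (fun x : ℂ => (q : ℂ) / x) x := by fun_prop (disch := exact hx)
  exact (hd x).mul ((hd _).comp x h2)

lemma theta_deriv_one (hq0 : 0 < q) (hq1 : q < 1) :
    HasDerivAt (theta q) (-(qPoch q q) ^ 2) 1 := by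
  have hd := qPoch_differentiable hq0 hq1
  have h1 : DifferentiableAt ℂ (fun x : ℂ => qPoch q (x * q) * qPoch q (q / x)) 1 := by
    have h2 : DifferentiableAt ℂ (fun x : ℂ => (q : ℂ) / x) 1 := by
      fun_prop (disch := norm_num)
    exact ((hd _).comp (1 : ℂ) (by fun_prop)).mul ((hd _).comp (1 : ℂ) h2)
  have h3 := (((hasDerivAt_id (1 : ℂ)).const_sub 1).mul h1.hasDerivAt)
  have e : theta q = (fun x : ℂ => 1 - id x) * (fun x : ℂ => qPoch q (x * q) * qPoch q (q / x)) := by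
    funext x
    simp [theta_eq hq0 hq1 x]
  rw [e]
  refine h3.congr_deriv ?_
  simp only [id, one_mul, sub_self, zero_mul, add_zero, div_one]
  ring

lemma theta_deriv_neg_one (hq0 : 0 < q) (hq1 : q < 1) :
    2 * deriv (theta q) (-1) = - theta q (-1) := by
  have hd := (theta_differentiableAt hq0 hq1 (-1) (by norm_num)).hasDerivAt
  have hne : (-1 : ℂ) ≠ 0 := by norm_num
  have h1 : HasDerivAt (fun x : ℂ => theta q (x⁻¹)) (deriv (theta q) (-1) * -((-1 : ℂ) ^ 2)⁻¹) (-1) := by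
    have hi := hasDerivAt_inv hne
    have hd' : HasDerivAt (theta q) (deriv (theta q) (-1)) ((-1 : ℂ)⁻¹) := by
      rw [show (-1 : ℂ)⁻¹ = -1 by norm_num]; exact hd
    exact hd'.comp (-1 : ℂ) hi
  have h2 : HasDerivAt (fun x : ℂ => - theta q x / x)
      ((-deriv (theta q) (-1) * (-1) - (-theta q (-1)) * 1) / (-1) ^ 2) (-1) :=
    hd.neg.div (hasDerivAt_id (-1 : ℂ)) hne
  have h3 : (fun x : ℂ => theta q (x⁻¹)) =ᶠ[nhds (-1)] (fun x : ℂ => - theta q x / x) := by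
    filter_upwards [isOpen_ne.mem_nhds hne] with x hx
    exact theta_inv hq0 hq1 x hx
  have h4 := (h2.congr_of_eventuallyEq h3).unique h1
  norm_num at h4
  linear_combination h4

end ThetaBasics

section TripleProduct

lemma rec_summable (a : ℤ → ℂ) (c s : ℂ) (hc : c ≠ 0) (hs0 : s ≠ 0) (hs : ‖s‖ < 1)
    (ha : ∀ n, a n ≠ 0) (hr : ∀ n : ℤ, a (n + 1) = a n * (c * s ^ n)) : Summable a := by
  have hpow : Filter.Tendsto (fun n : ℕ => ‖s‖ ^ n) Filter.atTop (nhds 0) :=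
    tendsto_pow_atTop_nhds_zero_of_lt_one (norm_nonneg _) hs
  apply Summable.of_nat_of_neg
  · refine summable_of_ratio_test_tendsto_lt_one (l := 0) zero_lt_one (.of_forall fun n => ha _) ?_
    have h1 : (fun n : ℕ => ‖a ((n + 1 : ℕ) : ℤ)‖ / ‖a (n : ℤ)‖) = fun n : ℕ => ‖c‖ * ‖s‖ ^ n := by
      funext n
      have := norm_ne_zero_iff.mpr (ha n)
      push_cast
      rw [hr, norm_mul, norm_mul, zpow_natCast, norm_pow]
      field_simp
    rw [h1]
    simpa using hpow.const_mul ‖c‖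
  · refine summable_of_ratio_test_tendsto_lt_one (l := 0) zero_lt_one (.of_forall fun n => ha _) ?_
    have h1 : (fun n : ℕ => ‖a (-((n + 1 : ℕ) : ℤ))‖ / ‖a (-(n : ℤ))‖)
        = fun n : ℕ => (‖c‖⁻¹ * ‖s‖) * ‖s‖ ^ n := by
      funext n
      have e := hr (-((n + 1 : ℕ) : ℤ))
      rw [show -((n + 1 : ℕ) : ℤ) + 1 = -(n : ℤ) by push_cast; ring] at e
      rw [e, norm_mul, norm_mul, zpow_neg, zpow_natCast, norm_inv, norm_pow]
      have := norm_ne_zero_iff.mpr (ha (-((n + 1 : ℕ) : ℤ)))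
      have := norm_ne_zero_iff.mpr hc
      have := norm_ne_zero_iff.mpr hs0
      field_simp
      ring
    rw [h1]
    simpa using hpow.const_mul (‖c‖⁻¹ * ‖s‖)

/-- coefficients of the theta series -/
noncomputable def tc (q : ℝ) (n : ℤ) : ℂ := (-1) ^ n * (q : ℂ) ^ (n * (n - 1) / 2)

lemma tri_two (n : ℤ) : 2 * (n * (n - 1) / 2) = n * (n - 1) :=
  Int.mul_ediv_cancel' (Int.even_mul_pred_self n).two_dvd

variable {q : ℝ}

lemma tc_succ (hq0 : 0 < q) (n : ℤ) : tc q (n + 1) = tc q n * (-(q : ℂ) ^ n) := by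
  have hq : (q : ℂ) ≠ 0 := by exact_mod_cast hq0.ne'
  have e : (n + 1) * (n + 1 - 1) / 2 = n * (n - 1) / 2 + n := by
    have h1 := tri_two n
    have h2 := tri_two (n + 1)
    have : 2 * ((n + 1) * (n + 1 - 1) / 2) = 2 * (n * (n - 1) / 2 + n) := by
      rw [h2, mul_add, h1]; ring
    omega
  unfold tc
  rw [e, zpow_add₀ hq, zpow_add_one₀ (by norm_num)]
  ring

lemma tc_ne (hq0 : 0 < q) (n : ℤ) : tc q n ≠ 0 := by
  have hq : (q : ℂ) ≠ 0 := by exact_mod_cast hq0.ne'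
  exact mul_ne_zero (zpow_ne_zero _ (by norm_num)) (zpow_ne_zero _ hq)

lemma tc_summable (hq0 : 0 < q) (hq1 : q < 1) (z : ℂ) (hz : z ≠ 0) :
    Summable fun n : ℤ => tc q n * z ^ n := by
  have hq : (q : ℂ) ≠ 0 := by exact_mod_cast hq0.ne'
  refine rec_summable _ (-z) q (neg_ne_zero.mpr hz) hq (norm_q_lt hq0 hq1)
    (fun n => mul_ne_zero (tc_ne hq0 n) (zpow_ne_zero _ hz)) fun n => ?_
  rw [tc_succ hq0, zpow_add_one₀ hz]
  ring

/-- partial products -/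
noncomputable def pq (q : ℝ) (n : ℕ) : ℂ := ∏ k ∈ Finset.range n, (1 - (q : ℂ) * (q : ℂ) ^ k)

lemma pq_ne (hq0 : 0 < q) (hq1 : q < 1) (n : ℕ) : pq q n ≠ 0 := by
  refine Finset.prod_ne_zero_iff.mpr fun k _ hk => ?_
  have h1 : q * q ^ k = 1 := by
    have : (q : ℂ) * (q : ℂ) ^ k = 1 := by linear_combination -hk
    exact_mod_cast this
  rw [← pow_succ'] at h1
  exact (pow_lt_one₀ hq0.le hq1 (Nat.succ_ne_zero k)).ne h1

lemma pq_tendsto (hq0 : 0 < q) (hq1 : q < 1) :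
    Filter.Tendsto (pq q) Filter.atTop (nhds (qPoch q q)) :=
  (qPoch_multipliable hq0 hq1 q).hasProd.tendsto_prod_nat

/-- inverse partial products, extended by zero -/
noncomputable def eP (q : ℝ) (n : ℤ) : ℂ := if n < 0 then 0 else (pq q n.toNat)⁻¹

lemma eP_rec (hq0 : 0 < q) (hq1 : q < 1) (n : ℤ) :
    eP q (n - 1) = (1 - (q : ℂ) ^ n) * eP q n := by
  rcases lt_trichotomy n 0 with h | h | h
  · simp [eP, h, show n - 1 < 0 by omega]
  · subst h; simp [eP]
  · obtain ⟨m, rfl⟩ : ∃ m : ℕ, n = m + 1 := ⟨(n - 1).toNat, by omega⟩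
    have h1 := pq_ne hq0 hq1 (m + 1)
    have h2 : pq q (m + 1) = pq q m * (1 - (q : ℂ) * (q : ℂ) ^ m) := Finset.prod_range_succ _ _
    have h3 := pq_ne hq0 hq1 m
    have e1 : eP q ((m : ℤ) + 1 - 1) = (pq q m)⁻¹ := by simp [eP]
    have e2 : eP q ((m : ℤ) + 1) = (pq q (m + 1))⁻¹ := by
      have : ((m : ℤ) + 1).toNat = m + 1 := by omega
      simp [eP, this, show ¬ ((m : ℤ) + 1 < 0) by omega]
    have e3 : (q : ℂ) ^ ((m : ℤ) + 1) = q * (q : ℂ) ^ m := by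
      rw [show ((m : ℤ) + 1) = ((m + 1 : ℕ) : ℤ) by push_cast; ring, zpow_natCast, pow_succ']
    rw [e1, e2, e3]
    rw [h2] at h1 ⊢
    have h4 := right_ne_zero_of_mul h1
    field_simp

lemma eP_bound (hq0 : 0 < q) (hq1 : q < 1) : ∃ K : ℝ, 0 ≤ K ∧ ∀ n, ‖eP q n‖ ≤ K := by
  have h := (pq_tendsto hq0 hq1).inv₀ (qPoch_q_ne hq0 hq1)
  obtain ⟨K, hK⟩ := (Metric.isBounded_range_of_tendsto _ h).exists_norm_le
  have hK0 : 0 ≤ K := (norm_nonneg _).trans (hK _ (Set.mem_range_self 0))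
  refine ⟨K, hK0, fun n => ?_⟩
  unfold eP
  split_ifs
  · simpa using hK0
  · exact hK _ (Set.mem_range_self n.toNat)

lemma eP_tendsto (hq0 : 0 < q) (hq1 : q < 1) (n : ℤ) :
    Filter.Tendsto (fun N : ℕ => eP q (N + n)) Filter.atTop (nhds (qPoch q q)⁻¹) := by
  have h := (pq_tendsto hq0 hq1).inv₀ (qPoch_q_ne hq0 hq1)
  have ht : Filter.Tendsto (fun N : ℕ => ((N : ℤ) + n).toNat) Filter.atTop Filter.atTop := by
    refine Filter.tendsto_atTop.mpr fun b => ?_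
    filter_upwards [Filter.eventually_ge_atTop (b + n.natAbs)] with N hN
    omega
  refine (h.comp ht).congr' ?_
  filter_upwards [Filter.eventually_ge_atTop n.natAbs] with N hN
  simp [eP, show ¬ ((N : ℤ) + n < 0) by omega]

/-- terms of the finite triple product -/
noncomputable def fT (q : ℝ) (z : ℂ) (N : ℕ) (n : ℤ) : ℂ :=
  tc q n * z ^ n * (eP q (N - n) * eP q (N + n))

/-- finite product -/
noncomputable def gT (q : ℝ) (z : ℂ) (N : ℕ) : ℂ :=
  (∏ k ∈ Finset.range N, (1 - z * (q : ℂ) ^ k)) * ∏ k ∈ Finset.range N, (1 - (q : ℂ) / z * (q : ℂ) ^ k)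

set_option maxHeartbeats 1000000 in
lemma finite_triple (hq0 : 0 < q) (hq1 : q < 1) (z : ℂ) (hz : z ≠ 0) (N : ℕ) :
    HasSum (fun n => pq q (2 * N) * fT q z N n) (gT q z N) := by
  have hq : (q : ℂ) ≠ 0 := by exact_mod_cast hq0.ne'
  induction N with
  | zero =>
    have : ∀ n : ℤ, n ≠ 0 → pq q (2 * 0) * fT q z 0 n = 0 := by
      intro n hn
      rcases lt_or_gt_of_ne hn with h | h
      · simp [fT, eP, h]
      · simp [fT, eP, h]
    convert hasSum_single (0 : ℤ) this using 1
    simp [gT, fT, pq, eP, tc]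
  | succ N ih =>
    have s1 : HasSum (fun n : ℤ => pq q (2 * N) * fT q z N (n + 1)) (gT q z N) :=
      (Equiv.hasSum_iff (f := fun n : ℤ => pq q (2 * N) * fT q z N n) (Equiv.addRight (1 : ℤ))).mpr ih
    have s2 : HasSum (fun n : ℤ => pq q (2 * N) * fT q z N (n - 1)) (gT q z N) :=
      (Equiv.hasSum_iff (f := fun n : ℤ => pq q (2 * N) * fT q z N n) (Equiv.subRight (1 : ℤ))).mpr ih
    have s := ((ih.mul_left (1 + (q : ℂ) ^ (2 * N + 1))).sub (s2.mul_left (z * (q : ℂ) ^ N))).sub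
      (s1.mul_left ((q : ℂ) ^ (N + 1) / z))
    have eg : gT q z (N + 1) = (1 + (q : ℂ) ^ (2 * N + 1)) * gT q z N - z * (q : ℂ) ^ N * gT q z N
        - (q : ℂ) ^ (N + 1) / z * gT q z N := by
      unfold gT
      rw [Finset.prod_range_succ, Finset.prod_range_succ]
      field_simp
      ring
    rw [eg]
    refine (funext fun n => ?_ : (fun n => pq q (2 * (N + 1)) * fT q z (N + 1) n) = _) ▸ s
    have ep : pq q (2 * (N + 1)) = pq q (2 * N) * (1 - (q : ℂ) * (q : ℂ) ^ (2 * N))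
        * (1 - (q : ℂ) * (q : ℂ) ^ (2 * N + 1)) := by
      rw [show 2 * (N + 1) = 2 * N + 1 + 1 by ring]
      unfold pq
      rw [Finset.prod_range_succ, Finset.prod_range_succ]
    rw [ep]
    have hX : (q : ℂ) ^ n ≠ 0 := zpow_ne_zero _ hq
    have hA : (q : ℂ) ^ N ≠ 0 := pow_ne_zero _ hq
    have t1 := tc_succ hq0 n
    have t2 : tc q (n - 1) = - tc q n * (q / (q : ℂ) ^ n) := by
      have := tc_succ hq0 (n - 1)
      rw [sub_add_cancel, zpow_sub_one₀ hq] at this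
      rw [this]
      field_simp
    have z1 : z ^ (n + 1) = z ^ n * z := zpow_add_one₀ hz n
    have z2 : z ^ (n - 1) = z ^ n / z := by rw [zpow_sub_one₀ hz]; rfl
    have p1 : ∀ j : ℤ, (q : ℂ) ^ ((N : ℤ) + j) = (q : ℂ) ^ N * (q : ℂ) ^ j := by
      intro j; rw [zpow_add₀ hq, zpow_natCast]
    have p2 : (q : ℂ) ^ (-n) = ((q : ℂ) ^ n)⁻¹ := zpow_neg _ _
    -- the values of eP
    have e1 : eP q ((N : ℤ) - n) = (1 - (q : ℂ) ^ N * (q / (q : ℂ) ^ n)) * eP q ((N : ℤ) + 1 - n) := by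
      have := eP_rec hq0 hq1 ((N : ℤ) + 1 - n)
      rw [show (N : ℤ) + 1 - n - 1 = N - n by ring,
        show (N : ℤ) + 1 - n = N + (1 + -n) by ring, p1, zpow_add₀ hq, p2, zpow_one] at this
      rw [this, show (N : ℤ) + 1 - n = N + (1 + -n) by ring]
      rfl
    have e2 : eP q ((N : ℤ) - (n + 1)) = (1 - (q : ℂ) ^ N / (q : ℂ) ^ n) * eP q ((N : ℤ) - n) := by
      have := eP_rec hq0 hq1 ((N : ℤ) - n)
      rw [show (N : ℤ) - n - 1 = N - (n + 1) by ring,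
        show (N : ℤ) - n = N + (-n) by ring, p1, p2] at this
      rw [this, show (N : ℤ) - n = N + (-n) by ring]
      rfl
    have e3 : eP q ((N : ℤ) + n) = (1 - (q : ℂ) ^ N * (q * (q : ℂ) ^ n)) * eP q ((N : ℤ) + 1 + n) := by
      have := eP_rec hq0 hq1 ((N : ℤ) + 1 + n)
      rw [show (N : ℤ) + 1 + n - 1 = N + n by ring,
        show (N : ℤ) + 1 + n = N + (1 + n) by ring, p1, zpow_add₀ hq, zpow_one] at this
      rw [this, show (N : ℤ) + 1 + n = N + (1 + n) by ring]
    have e4 : eP q ((N : ℤ) + (n - 1)) = (1 - (q : ℂ) ^ N * (q : ℂ) ^ n) * eP q ((N : ℤ) + n) := by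
      have := eP_rec hq0 hq1 ((N : ℤ) + n)
      rw [show (N : ℤ) + n - 1 = N + (n - 1) by ring, p1] at this
      exact this
    have e5 : (N : ℤ) - (n - 1) = N + 1 - n := by ring
    have e6 : (N : ℤ) + (n + 1) = N + 1 + n := by ring
    unfold fT
    rw [t1, t2, z1, z2, e2, e4, e5, e6, e1, e3]
    push_cast
    have hh : (q : ℂ) ^ (2 * N) = (q : ℂ) ^ N * (q : ℂ) ^ N := by rw [two_mul, pow_add]
    rw [pow_succ _ (2 * N), pow_succ _ N, hh]
    generalize (q : ℂ) ^ N = A at *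
    generalize (q : ℂ) ^ n = X at *
    field_simp
    ring

lemma triple_product (hq0 : 0 < q) (hq1 : q < 1) (z : ℂ) (hz : z ≠ 0) :
    ∑' n : ℤ, tc q n * z ^ n = qPoch q q * theta q z := by
  have hc := qPoch_q_ne hq0 hq1
  obtain ⟨K, hK0, hK⟩ := eP_bound hq0 hq1
  have l1 : Filter.Tendsto (fun N : ℕ => ∑' n, fT q z N n) Filter.atTop
      (nhds (∑' n : ℤ, tc q n * z ^ n * ((qPoch q q)⁻¹ * (qPoch q q)⁻¹))) := by
    refine tendsto_tsum_of_dominated_convergence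
      (bound := fun n : ℤ => ‖tc q n * z ^ n‖ * (K * K)) ?_ ?_ ?_
    · exact (tc_summable hq0 hq1 z hz).norm.mul_right _
    · intro n
      have h1 := eP_tendsto hq0 hq1 n
      have h2 := eP_tendsto hq0 hq1 (-n)
      exact (h2.mul h1).const_mul _
    · refine .of_forall fun N n => ?_
      unfold fT
      rw [norm_mul, norm_mul (eP q _)]
      gcongr
      · exact hK _
      · exact hK _
  have l2 : Filter.Tendsto (fun N : ℕ => pq q (2 * N)) Filter.atTop (nhds (qPoch q q)) :=
    (pq_tendsto hq0 hq1).comp (Filter.tendsto_id.const_mul_atTop' (by norm_num))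
  have l3 : Filter.Tendsto (gT q z) Filter.atTop (nhds (theta q z)) :=
    (qPoch_multipliable hq0 hq1 z).hasProd.tendsto_prod_nat.mul
      (qPoch_multipliable hq0 hq1 (q / z)).hasProd.tendsto_prod_nat
  have l4 : (fun N : ℕ => pq q (2 * N) * ∑' n, fT q z N n) = gT q z := by
    funext N
    rw [← tsum_mul_left]
    exact (finite_triple hq0 hq1 z hz N).tsum_eq
  have := tendsto_nhds_unique (l2.mul l1) (l4 ▸ l3)
  rw [tsum_mul_right] at this
  rw [← this]
  field_simp

/-- even theta series -/
noncomputable def aS (q : ℝ) (y : ℂ) : ℂ := ∑' l : ℤ, (q : ℂ) ^ (l ^ 2) * y ^ (2 * l)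
/-- odd theta series -/
noncomputable def bS (q : ℝ) (y : ℂ) : ℂ := ∑' l : ℤ, (q : ℂ) ^ (l ^ 2 + l) * y ^ (2 * l + 1)

lemma norm_q2_lt (hq0 : 0 < q) (hq1 : q < 1) : ‖(q : ℂ) ^ 2‖ < 1 := by
  rw [norm_pow]
  exact pow_lt_one₀ (norm_nonneg _) (norm_q_lt hq0 hq1) (by norm_num)

lemma aS_summable (hq0 : 0 < q) (hq1 : q < 1) (y : ℂ) (hy : y ≠ 0) :
    Summable fun l : ℤ => (q : ℂ) ^ (l ^ 2) * y ^ (2 * l) := by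
  have hq : (q : ℂ) ≠ 0 := by exact_mod_cast hq0.ne'
  refine rec_summable _ (q * y ^ 2) (q ^ 2) (by positivity) (by positivity) (norm_q2_lt hq0 hq1)
    (fun n => mul_ne_zero (zpow_ne_zero _ hq) (zpow_ne_zero _ hy)) fun n => ?_
  rw [show (n + 1) ^ 2 = n ^ 2 + (2 * n + 1) by ring, show 2 * (n + 1) = 2 * n + 2 by ring,
    zpow_add₀ hq, zpow_add₀ hy, zpow_add₀ hq, zpow_mul (q : ℂ)]
  have e2 : ∀ w : ℂ, w ^ (2 : ℤ) = w ^ 2 := fun w => by norm_cast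
  rw [e2, e2]
  try rw [e2]
  try rw [zpow_one]
  ring

lemma bS_summable (hq0 : 0 < q) (hq1 : q < 1) (y : ℂ) (hy : y ≠ 0) :
    Summable fun l : ℤ => (q : ℂ) ^ (l ^ 2 + l) * y ^ (2 * l + 1) := by
  have hq : (q : ℂ) ≠ 0 := by exact_mod_cast hq0.ne'
  refine rec_summable _ (q ^ 2 * y ^ 2) (q ^ 2) (by positivity) (by positivity) (norm_q2_lt hq0 hq1)
    (fun n => mul_ne_zero (zpow_ne_zero _ hq) (zpow_ne_zero _ hy)) fun n => ?_
  rw [show (n + 1) ^ 2 + (n + 1) = n ^ 2 + n + (2 * n + 2) by ring,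
    show 2 * (n + 1) + 1 = 2 * n + 1 + 2 by ring,
    zpow_add₀ hq _ (2 * n + 2), zpow_add₀ hy _ 2, zpow_add₀ hq _ 2, zpow_mul (q : ℂ)]
  have e2 : ∀ w : ℂ, w ^ (2 : ℤ) = w ^ 2 := fun w => by norm_cast
  rw [e2, e2]
  try rw [e2]
  try rw [zpow_one]
  ring

lemma hasSum_prod_mul {f g : ℤ → ℂ} (hf : Summable f) (hg : Summable g) :
    HasSum (fun p : ℤ × ℤ => f p.1 * g p.2) ((∑' n, f n) * ∑' n, g n) := by
  have hs := summable_mul_of_summable_norm hf.norm hg.norm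
  rw [tsum_mul_tsum_of_summable_norm hf.norm hg.norm]
  exact hs.hasSum

set_option maxHeartbeats 1000000 in
lemma series_product (hq0 : 0 < q) (hq1 : q < 1) (x y : ℂ) (hx : x ≠ 0) (hy : y ≠ 0) :
    (∑' n : ℤ, tc q n * (x * y) ^ n) * (∑' n : ℤ, tc q n * (x / y) ^ n)
      = x * (bS q x * aS q y - aS q x * bS q y) := by
  have hq : (q : ℂ) ≠ 0 := by exact_mod_cast hq0.ne'
  have h1 := hasSum_prod_mul (tc_summable hq0 hq1 (x * y) (mul_ne_zero hx hy))
    (tc_summable hq0 hq1 (x / y) (div_ne_zero hx hy))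
  have hE := (hasSum_prod_mul (bS_summable hq0 hq1 x hx) (aS_summable hq0 hq1 y hy)).mul_left x
  have hO := (hasSum_prod_mul (aS_summable hq0 hq1 x hx) (bS_summable hq0 hq1 y hy)).mul_left (-x)
  set F : ℤ × ℤ → ℂ := fun p => tc q p.1 * (x * y) ^ p.1 * (tc q p.2 * (x / y) ^ p.2) with hF
  have i1 : Function.Injective (fun p : ℤ × ℤ => (p.1 + 1 + p.2, p.1 + 1 - p.2)) := by
    rintro ⟨a, b⟩ ⟨c, d⟩ h
    simp only [Prod.mk.injEq] at h ⊢
    omega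
  have i2 : Function.Injective (fun p : ℤ × ℤ => (p.1 + p.2 + 1, p.1 - p.2)) := by
    rintro ⟨a, b⟩ ⟨c, d⟩ h
    simp only [Prod.mk.injEq] at h ⊢
    omega
  have tm : ∀ n m : ℤ, tc q n * tc q m = (-1) ^ (n + m) * (q : ℂ) ^ (n * (n - 1) / 2 + m * (m - 1) / 2) := by
    intro n m
    unfold tc
    rw [zpow_add₀ hq, zpow_add₀ (by norm_num)]
    ring
  have zm : ∀ n m : ℤ, (x * y) ^ n * (x / y) ^ m = x ^ (n + m) * y ^ (n - m) := by
    intro n m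
    rw [mul_zpow, div_zpow, zpow_add₀ hx, zpow_sub₀ hy]
    ring
  have FE : F ∘ (fun p : ℤ × ℤ => (p.1 + 1 + p.2, p.1 + 1 - p.2)) = fun p : ℤ × ℤ =>
      x * ((q : ℂ) ^ (p.1 ^ 2 + p.1) * x ^ (2 * p.1 + 1) * ((q : ℂ) ^ (p.2 ^ 2) * y ^ (2 * p.2))) := by
    funext ⟨k, l⟩
    simp only [Function.comp, hF]
    rw [mul_mul_mul_comm, tm, zm]
    have e : (k + 1 + l) * (k + 1 + l - 1) / 2 + (k + 1 - l) * (k + 1 - l - 1) / 2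
        = (k ^ 2 + k) + l ^ 2 := by
      have h1 := tri_two (k + 1 + l)
      have h2 := tri_two (k + 1 - l)
      have : 2 * ((k + 1 + l) * (k + 1 + l - 1) / 2 + (k + 1 - l) * (k + 1 - l - 1) / 2)
        = 2 * ((k ^ 2 + k) + l ^ 2) := by rw [mul_add, h1, h2]; ring
      omega
    rw [e, show k + 1 + l + (k + 1 - l) = 2 * (k + 1) by ring,
      show k + 1 + l - (k + 1 - l) = 2 * l by ring, zpow_add₀ hq, zpow_mul (-1 : ℂ),
      show 2 * (k + 1) = 2 * k + 1 + 1 by ring, zpow_add_one₀ hx]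
    norm_num
    ring
  have FO : F ∘ (fun p : ℤ × ℤ => (p.1 + p.2 + 1, p.1 - p.2)) = fun p : ℤ × ℤ =>
      -x * ((q : ℂ) ^ (p.1 ^ 2) * x ^ (2 * p.1) * ((q : ℂ) ^ (p.2 ^ 2 + p.2) * y ^ (2 * p.2 + 1))) := by
    funext ⟨k, l⟩
    simp only [Function.comp, hF]
    rw [mul_mul_mul_comm, tm, zm]
    have e : (k + l + 1) * (k + l + 1 - 1) / 2 + (k - l) * (k - l - 1) / 2
        = k ^ 2 + (l ^ 2 + l) := by
      have h1 := tri_two (k + l + 1)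
      have h2 := tri_two (k - l)
      have : 2 * ((k + l + 1) * (k + l + 1 - 1) / 2 + (k - l) * (k - l - 1) / 2)
        = 2 * (k ^ 2 + (l ^ 2 + l)) := by rw [mul_add, h1, h2]; ring
      omega
    rw [e, show k + l + 1 + (k - l) = 2 * k + 1 by ring,
      show k + l + 1 - (k - l) = 2 * l + 1 by ring, zpow_add₀ hq,
      zpow_add_one₀ (show (-1 : ℂ) ≠ 0 by norm_num), zpow_mul (-1 : ℂ), zpow_add_one₀ hx]
    norm_num
    ring
  have hE' := i1.hasSum_range_iff.mpr (FE ▸ hE)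
  have hO' := i2.hasSum_range_iff.mpr (FO ▸ hO)
  have hcompl : IsCompl (Set.range (fun p : ℤ × ℤ => (p.1 + 1 + p.2, p.1 + 1 - p.2)))
      (Set.range (fun p : ℤ × ℤ => (p.1 + p.2 + 1, p.1 - p.2))) := by
    constructor
    · rw [Set.disjoint_left]
      rintro _ ⟨⟨a, b⟩, rfl⟩ ⟨⟨c, d⟩, h⟩
      simp only [Prod.mk.injEq] at h
      omega
    · rw [codisjoint_iff_le_sup]
      rintro ⟨n, m⟩ _
      rcases Int.emod_two_eq_zero_or_one (n + m) with h | h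
      · left
        refine ⟨((n + m) / 2 - 1, (n - m) / 2), ?_⟩
        simp only [Prod.mk.injEq]
        omega
      · right
        refine ⟨((n + m) / 2, (n - m) / 2), ?_⟩
        simp only [Prod.mk.injEq]
        omega
  have hT := HasSum.add_isCompl (f := F) hcompl hE' hO'
  rw [h1.unique hT]
  unfold aS bS
  ring

/-- alternating rank two form of products of theta functions -/
noncomputable def BT (q : ℝ) (x y : ℂ) : ℂ := theta q (x * y) * theta q (x / y) / x

lemma BT_eq (hq0 : 0 < q) (hq1 : q < 1) (x y : ℂ) (hx : x ≠ 0) (hy : y ≠ 0) :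
    BT q x y = ((qPoch q q) ^ 2)⁻¹ * (bS q x * aS q y - aS q x * bS q y) := by
  have h := series_product hq0 hq1 x y hx hy
  rw [triple_product hq0 hq1 _ (mul_ne_zero hx hy), triple_product hq0 hq1 _ (div_ne_zero hx hy)] at h
  have hc := qPoch_q_ne hq0 hq1
  unfold BT
  field_simp
  linear_combination h

lemma BT_plucker (hq0 : 0 < q) (hq1 : q < 1) (x y u v : ℂ) (hx : x ≠ 0) (hy : y ≠ 0) (hu : u ≠ 0)
    (hv : v ≠ 0) : BT q x y * BT q u v - BT q x u * BT q y v + BT q x v * BT q y u = 0 := by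
  rw [BT_eq hq0 hq1 x y hx hy, BT_eq hq0 hq1 u v hu hv, BT_eq hq0 hq1 x u hx hu,
    BT_eq hq0 hq1 y v hy hv, BT_eq hq0 hq1 x v hx hv, BT_eq hq0 hq1 y u hy hu]
  ring

end TripleProduct

section Relations

variable {q : ℝ}

/-- the ratio of theta functions -/
noncomputable def Hq (q : ℝ) (u : ℂ) : ℂ := theta q u / theta q (-u)
/-- the matrix entry -/
noncomputable def fq (q : ℝ) (u : ℂ) : ℂ := 1 + 2 * u * deriv (theta q) (-u) / theta q (-u)

lemma theta_I1 (hq0 : 0 < q) (hq1 : q < 1) (x y : ℂ) (hx : x ≠ 0) (hy : y ≠ 0) :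
    y * theta q (-1) ^ 2 * (theta q (x * y) * theta q (x / y))
      = theta q x ^ 2 * theta q (-y) ^ 2 - theta q y ^ 2 * theta q (-x) ^ 2 := by
  have h := BT_plucker hq0 hq1 x y (-1) 1 hx hy (by norm_num) (by norm_num)
  unfold BT at h
  simp only [mul_one, div_one, mul_neg, div_neg] at h
  field_simp at h
  linear_combination -h

lemma Hq_mul (hq0 : 0 < q) (hq1 : q < 1) (x y : ℂ) (hx : x ≠ 0) (hy : y ≠ 0)
    (h1 : theta q (-(x * y)) ≠ 0) (h2 : theta q (-(x / y)) ≠ 0) :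
    theta q (-x) ^ 2 * theta q (-y) ^ 2 - theta q x ^ 2 * theta q y ^ 2 ≠ 0 ∧
    Hq q (x * y) * Hq q (x / y) = (theta q x ^ 2 * theta q (-y) ^ 2 - theta q y ^ 2 * theta q (-x) ^ 2)
      / (theta q (-x) ^ 2 * theta q (-y) ^ 2 - theta q x ^ 2 * theta q y ^ 2) := by
  have e1 := theta_I1 hq0 hq1 x y hx hy
  have e2 := theta_I1 hq0 hq1 (-x) y (neg_ne_zero.mpr hx) hy
  rw [neg_neg, neg_mul, neg_div] at e2
  have hT := theta_neg_one_ne hq0 hq1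
  have e3 : theta q (-x) ^ 2 * theta q (-y) ^ 2 - theta q x ^ 2 * theta q y ^ 2
      = y * theta q (-1) ^ 2 * (theta q (-(x * y)) * theta q (-(x / y))) := by
    rw [e2]; ring
  rw [e3, ← e1]
  refine ⟨by positivity, ?_⟩
  unfold Hq
  field_simp

lemma tanh_ident (a a' b b' c c' : ℂ) (h1 : a' * b' - a * b ≠ 0) (h2 : c' * b' - c * b ≠ 0)
    (h3 : c' * a' - c * a ≠ 0) :
    (a * b' - b * a') / (a' * b' - a * b) - (c * b' - b * c') / (c' * b' - c * b)
      + (c * a' - a * c') / (c' * a' - c * a)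
    = (a * b' - b * a') / (a' * b' - a * b) * ((c * b' - b * c') / (c' * b' - c * b))
      * ((c * a' - a * c') / (c' * a' - c * a)) := by
  rw [div_sub_div _ _ h1 h2, div_add_div _ _ (mul_ne_zero h1 h2) h3, div_mul_div_comm,
    div_mul_div_comm]
  congr 1
  ring

lemma Hq_four' (hq0 : 0 < q) (hq1 : q < 1) (p r w : ℂ) (hp : p ≠ 0) (hr : r ≠ 0) (hw : w ≠ 0)
    (h1 : theta q (-(r * w)) ≠ 0) (h2 : theta q (-(r / w)) ≠ 0)
    (h3 : theta q (-(p * w)) ≠ 0) (h4 : theta q (-(p / w)) ≠ 0)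
    (h5 : theta q (-(p * r)) ≠ 0) (h6 : theta q (-(p / r)) ≠ 0) :
    Hq q (r * w) * Hq q (r / w) - Hq q (p * w) * Hq q (p / w) + Hq q (p * r) * Hq q (p / r)
    = (Hq q (r * w) * Hq q (r / w)) * (Hq q (p * w) * Hq q (p / w)) * (Hq q (p * r) * Hq q (p / r)) := by
  obtain ⟨d1, e1⟩ := Hq_mul hq0 hq1 r w hr hw h1 h2
  obtain ⟨d2, e2⟩ := Hq_mul hq0 hq1 p w hp hw h3 h4
  obtain ⟨d3, e3⟩ := Hq_mul hq0 hq1 p r hp hr h5 h6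
  rw [e1, e2, e3]
  exact tanh_ident _ _ _ _ _ _ d1 d2 d3

lemma exists_sqrt (x : ℂ) (hx : x ≠ 0) : ∃ s : ℂ, s ≠ 0 ∧ x = s * s := by
  obtain ⟨s, hs⟩ := IsAlgClosed.exists_pow_nat_eq x (n := 2) (by norm_num)
  refine ⟨s, ?_, by rw [← hs, sq]⟩
  rintro rfl
  exact hx (by rw [← hs]; norm_num)

lemma Hq_four (hq0 : 0 < q) (hq1 : q < 1) (x1 x2 x3 x4 : ℂ) (n1 : x1 ≠ 0) (n2 : x2 ≠ 0)
    (n3 : x3 ≠ 0) (n4 : x4 ≠ 0)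
    (h1 : theta q (-(x2 / x1)) ≠ 0) (h2 : theta q (-(x4 / x3)) ≠ 0)
    (h3 : theta q (-(x3 / x1)) ≠ 0) (h4 : theta q (-(x4 / x2)) ≠ 0)
    (h5 : theta q (-(x4 / x1)) ≠ 0) (h6 : theta q (-(x3 / x2)) ≠ 0) :
    Hq q (x2 / x1) * Hq q (x4 / x3) - Hq q (x3 / x1) * Hq q (x4 / x2) + Hq q (x4 / x1) * Hq q (x3 / x2)
    = (Hq q (x2 / x1) * Hq q (x4 / x3)) * (Hq q (x3 / x1) * Hq q (x4 / x2))
      * (Hq q (x4 / x1) * Hq q (x3 / x2)) := by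
  obtain ⟨s1, m1, rfl⟩ := exists_sqrt x1 n1
  obtain ⟨s2, m2, rfl⟩ := exists_sqrt x2 n2
  obtain ⟨s3, m3, rfl⟩ := exists_sqrt x3 n3
  obtain ⟨s4, m4, rfl⟩ := exists_sqrt x4 n4
  have a1 : s2 * s2 / (s1 * s1) = (s2 * s4 / (s1 * s3)) * (s2 * s3 / (s1 * s4)) := by field_simp
  have a2 : s4 * s4 / (s3 * s3) = (s2 * s4 / (s1 * s3)) / (s2 * s3 / (s1 * s4)) := by field_simp
  have a3 : s3 * s3 / (s1 * s1) = (s3 * s4 / (s1 * s2)) * (s2 * s3 / (s1 * s4)) := by field_simp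
  have a4 : s4 * s4 / (s2 * s2) = (s3 * s4 / (s1 * s2)) / (s2 * s3 / (s1 * s4)) := by field_simp
  have a5 : s4 * s4 / (s1 * s1) = (s3 * s4 / (s1 * s2)) * (s2 * s4 / (s1 * s3)) := by field_simp
  have a6 : s3 * s3 / (s2 * s2) = (s3 * s4 / (s1 * s2)) / (s2 * s4 / (s1 * s3)) := by field_simp
  rw [a1] at h1
  rw [a2] at h2
  rw [a3] at h3
  rw [a4] at h4
  rw [a5] at h5
  rw [a6] at h6
  rw [a1, a2, a3, a4, a5, a6]
  exact Hq_four' hq0 hq1 _ _ _ (by positivity) (by positivity) (by positivity) h1 h2 h3 h4 h5 h6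

lemma Hq_inv (hq0 : 0 < q) (hq1 : q < 1) (u : ℂ) (hu : u ≠ 0) : Hq q u⁻¹ = - Hq q u := by
  unfold Hq
  rw [theta_inv hq0 hq1 u hu, ← inv_neg, theta_inv hq0 hq1 (-u) (neg_ne_zero.mpr hu)]
  rw [neg_div_neg_eq, neg_div, neg_div, div_div_div_cancel_right₀ hu]

lemma Hq_neg (u : ℂ) : Hq q (-u) = (Hq q u)⁻¹ := by
  unfold Hq
  rw [neg_neg, inv_div]

lemma fq_three (hq0 : 0 < q) (hq1 : q < 1) (α β : ℂ) (hα : α ≠ 0) (hβ : β ≠ 0)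
    (h1 : theta q (-α) ≠ 0) (h2 : theta q (-β) ≠ 0) (h3 : theta q (-(α / β)) ≠ 0) :
    fq q β - fq q α + fq q (α / β)
      = (qPoch q q / qPoch q (-q)) ^ 2 * (Hq q β * Hq q α * Hq q (α / β)) := by
  obtain ⟨u, hu, e⟩ := exists_sqrt (α / β) (div_ne_zero hα hβ)
  have eα : α = β * (u * u) := by rw [← e]; field_simp
  set x := -(β * u) with hx
  have hx0 : x ≠ 0 := by rw [hx]; exact neg_ne_zero.mpr (mul_ne_zero hβ hu)
  have exu : x * u = -α := by rw [hx, eα]; ring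
  have exd : x / u = -β := by rw [hx]; field_simp
  have hd := fun z hz => (theta_differentiableAt hq0 hq1 (x := z) hz).hasDerivAt
  -- the derivative of v ↦ BT x v
  have dmul : ∀ c : ℂ, HasDerivAt (fun v : ℂ => c * v) c u := fun c => by
    simpa using (hasDerivAt_id u).const_mul c
  have ddiv : ∀ c : ℂ, HasDerivAt (fun v : ℂ => c / v) (-c / u ^ 2) u := fun c => by
    have := (hasDerivAt_inv hu).const_mul c
    simp only [div_eq_mul_inv]
    rw [show -c * (u ^ 2)⁻¹ = c * -(u ^ 2)⁻¹ by ring]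
    exact this
  have dBT : ∀ c : ℂ, c ≠ 0 → HasDerivAt (fun v => BT q c v)
      ((deriv (theta q) (c * u) * c * theta q (c / u)
        + theta q (c * u) * (deriv (theta q) (c / u) * (-c / u ^ 2))) / c) u := by
    intro c hc
    have d1 : HasDerivAt (fun v => theta q (c * v)) (deriv (theta q) (c * u) * c) u :=
      (hd (c * u) (mul_ne_zero hc hu)).comp u (dmul c)
    have d2 : HasDerivAt (fun v => theta q (c / v)) (deriv (theta q) (c / u) * (-c / u ^ 2)) u :=
      (hd (c / u) (div_ne_zero hc hu)).comp u (ddiv c)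
    exact (d1.mul d2).div_const c
  have hF := (((dBT u hu).const_mul (BT q x (-u))).sub
    ((dBT (-u) (neg_ne_zero.mpr hu)).const_mul (BT q x u))).add ((dBT x hx0).mul_const (BT q (-u) u))
  have hF0 : HasDerivAt (fun v => BT q x (-u) * BT q u v - BT q x u * BT q (-u) v
      + BT q x v * BT q (-u) u) 0 u := by
    refine (hasDerivAt_const u (0 : ℂ)).congr_of_eventuallyEq ?_
    filter_upwards [isOpen_ne.mem_nhds hu] with v hv
    exact BT_plucker hq0 hq1 x (-u) u v hx0 (neg_ne_zero.mpr hu) hu hv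
  have key := hF.unique hF0
  have t1 : theta q 1 = 0 := theta_one hq0 hq1
  have t2 := (theta_deriv_one hq0 hq1).deriv
  have t3 := theta_deriv_neg_one hq0 hq1
  have t4 := theta_neg_one hq0 hq1
  have t5 := qPoch_neg_q_ne hq0 hq1
  unfold BT at key
  rw [show -u * u = -(α / β) by rw [e]; ring, show -u / u = -1 by field_simp, ← e, mul_neg, show x / -u = β by rw [div_neg, exd, neg_neg],
    exu, exd, div_self hu, t1, t2] at key
  simp only [neg_neg] at key
  have t3' : deriv (theta q) (-1) = - theta q (-1) / 2 := by rw [← t3]; ring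
  rw [t3', t4] at key
  unfold fq Hq
  have e' : u ^ 2 = α / β := by rw [e, sq]
  have hxx : x = -α / u := by rw [← exu]; field_simp
  rw [hxx] at key
  set P := qPoch q q
  set Q := qPoch q (-q)
  generalize deriv (theta q) (-α) = D1 at *
  generalize deriv (theta q) (-β) = D2 at *
  generalize deriv (theta q) (-(α / β)) = D3 at *
  generalize theta q (-α) = T1 at *
  generalize theta q (-β) = T2 at *
  generalize theta q (-(α / β)) = T3 at *
  generalize theta q (α) = S1 at *
  generalize theta q (β) = S2 at *
  generalize theta q ((α / β)) = S3 at *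
  have eb : α = β * u ^ 2 := by rw [e']; field_simp
  clear_value P Q
  clear dmul ddiv dBT hF hF0 hd exu exd hx hxx hx0 t1 t2 t3 t3' t4 e e' eα
  clear x
  subst eb
  field_simp at key
  field_simp
  linear_combination key

end Relations

section Main

variable {q : ℝ}

lemma goodPair_of_generic (hq0 : 0 < q) (hq1 : q < 1) {ι : Type*} (x : ι → ℂ) (hx0 : ∀ i, x i ≠ 0)
    (N : ∀ i j, theta q (-(x j / x i)) ≠ 0) (M : ∀ i j, i ≠ j → theta q (x j / x i) ≠ 0) :
    GoodPair (fun i j => fq q (x j / x i)) (fun i j => Hq q (x j / x i))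
      ((qPoch q q / qPoch q (-q)) ^ 2) := by
  have anti : ∀ i j, Hq q (x i / x j) = - Hq q (x j / x i) := by
    intro i j
    rw [← Hq_inv hq0 hq1 _ (div_ne_zero (hx0 j) (hx0 i)), inv_div]
  refine ⟨anti, ?_, ?_, ?_, ?_⟩
  · intro i j hij
    exact div_ne_zero (M i j hij) (N i j)
  · intro i j k l _ _ _ _ _ _
    have h := Hq_four hq0 hq1 (x i) (x j) (x k) (x l) (hx0 i) (hx0 j) (hx0 k) (hx0 l)
      (N _ _) (N _ _) (N _ _) (N _ _) (N _ _) (N _ _)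
    rw [anti l k, anti l j, anti l i] at h
    linear_combination -h
  · intro i j k l _ _ _ li lj lk
    have hn : ∀ i, - x l / x i = -(x l / x i) := fun i => neg_div _ _
    have h := Hq_four hq0 hq1 (x i) (x j) (x k) (-x l) (hx0 i) (hx0 j) (hx0 k)
      (neg_ne_zero.mpr (hx0 l)) (N _ _) (by rw [hn, neg_neg]; exact M _ _ lk.symm) (N _ _)
      (by rw [hn, neg_neg]; exact M _ _ lj.symm) (by rw [hn, neg_neg]; exact M _ _ li.symm) (N _ _)
    rw [hn, hn, hn, Hq_neg, Hq_neg, Hq_neg, anti l k, anti l j, anti l i, inv_neg, inv_neg,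
      inv_neg] at h
    linear_combination -h
  · intro i j k
    have e : x k / x j = (x k / x i) / (x j / x i) := by
      rw [div_div_div_cancel_right₀ (hx0 i)]
    have h := fq_three hq0 hq1 (x k / x i) (x j / x i) (div_ne_zero (hx0 _) (hx0 _))
      (div_ne_zero (hx0 _) (hx0 _)) (N _ _) (N _ _) (by rw [← e]; exact N _ _)
    rw [← e] at h
    exact h

lemma generic_case (hq0 : 0 < q) (hq1 : q < 1) (m : ℕ) (x : Fin (2 * m + 1) → ℂ)
    (hx0 : ∀ i, x i ≠ 0)
    (N : ∀ i j, theta q (-(x j / x i)) ≠ 0) (M : ∀ i j, i ≠ j → theta q (x j / x i) ≠ 0) :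
    pfaff (2 * m + 1) (Matrix.of fun i j => fq q (x j / x i)) =
      (qPoch q (q : ℂ) / qPoch q (-(q : ℂ))) ^ (2 * m) *
        ∏ i : Fin (2 * m + 1), ∏ j ∈ Finset.Ioi i, Hq q (x j / x i) := by
  rw [pfaff_good _ m _ _ (goodPair_of_generic hq0 hq1 x hx0 N M), pow_mul]
  rfl

lemma theta_analyticAt (hq0 : 0 < q) (hq1 : q < 1) (u : ℂ) (hu : u ≠ 0) :
    AnalyticAt ℂ (theta q) u := by
  have : DifferentiableOn ℂ (theta q) {0}ᶜ := fun z hz =>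
    (theta_differentiableAt hq0 hq1 z hz).differentiableWithinAt
  exact this.analyticAt (isOpen_compl_singleton.mem_nhds hu)

lemma theta_neg_cont (hq0 : 0 < q) (hq1 : q < 1) (u : ℂ) (hu : u ≠ 0) :
    ContinuousAt (fun u => theta q (-u)) u :=
  ContinuousAt.comp (g := theta q)
    (theta_analyticAt hq0 hq1 (-u) (neg_ne_zero.mpr hu)).continuousAt continuousAt_neg

lemma Hq_cont (hq0 : 0 < q) (hq1 : q < 1) (u : ℂ) (hu : u ≠ 0) (h : theta q (-u) ≠ 0) :
    ContinuousAt (Hq q) u :=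
  (theta_analyticAt hq0 hq1 u hu).continuousAt.div (theta_neg_cont hq0 hq1 u hu) h

lemma fq_cont (hq0 : 0 < q) (hq1 : q < 1) (u : ℂ) (hu : u ≠ 0) (h : theta q (-u) ≠ 0) :
    ContinuousAt (fq q) u := by
  have hd : ContinuousAt (fun u => deriv (theta q) (-u)) u :=
    ContinuousAt.comp (g := deriv (theta q))
      (theta_analyticAt hq0 hq1 (-u) (neg_ne_zero.mpr hu)).deriv.continuousAt continuousAt_neg
  exact continuousAt_const.add
    (((continuousAt_const.mul continuousAt_id).mul hd).div (theta_neg_cont hq0 hq1 u hu) h)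

lemma theta_exp_ne (hq0 : 0 < q) (hq1 : q < 1) (c d : ℂ) (hc : c ≠ 0) (hd : d ≠ 0) :
    ∀ᶠ t in nhdsWithin (0 : ℂ) {0}ᶜ, theta q (c * Complex.exp (d * t)) ≠ 0 := by
  have han : AnalyticOnNhd ℂ (fun t => theta q (c * Complex.exp (d * t))) Set.univ := by
    intro t _
    have h1 : AnalyticAt ℂ (fun t => c * Complex.exp (d * t)) t := by fun_prop
    exact AnalyticAt.fun_comp (g := theta q)
      (theta_analyticAt hq0 hq1 _ (mul_ne_zero hc (Complex.exp_ne_zero _))) h1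
  rcases (han 0 trivial).eventually_eq_zero_or_eventually_ne_zero with h | h
  · exfalso
    have h0 := han.eqOn_zero_of_preconnected_of_eventuallyEq_zero isPreconnected_univ trivial h
    have h1 := h0 (Set.mem_univ (Complex.log (-1 / c) / d))
    simp only [Pi.zero_apply] at h1
    rw [mul_div_cancel₀ _ hd, Complex.exp_log (div_ne_zero (by norm_num) hc),
      mul_div_cancel₀ _ hc] at h1
    exact theta_neg_one_ne hq0 hq1 h1
  · exact h

lemma pfaff_tendsto {α : Type*} {l : Filter α} (n : ℕ) (A : α → Fin n → Fin n → ℂ)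
    (B : Fin n → Fin n → ℂ) (h : ∀ i j, Filter.Tendsto (fun t => A t i j) l (nhds (B i j))) :
    Filter.Tendsto (fun t => pfaff n (Matrix.of (A t))) l (nhds (pfaff n (Matrix.of B))) := by
  unfold pfaff
  refine Filter.Tendsto.const_mul _ (tendsto_finsetSum _ fun σ _ => Filter.Tendsto.const_mul _
    (tendsto_finsetProd _ fun i _ => ?_))
  exact h _ _

lemma main_case (hq0 : 0 < q) (hq1 : q < 1) (m : ℕ) (x : Fin (2 * m + 1) → ℂ)
    (hx0 : ∀ i, x i ≠ 0) (N : ∀ i j, theta q (-(x j / x i)) ≠ 0) :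
    pfaff (2 * m + 1) (Matrix.of fun i j => fq q (x j / x i)) =
      (qPoch q (q : ℂ) / qPoch q (-(q : ℂ))) ^ (2 * m) *
        ∏ i : Fin (2 * m + 1), ∏ j ∈ Finset.Ioi i, Hq q (x j / x i) := by
  let X : ℂ → Fin (2 * m + 1) → ℂ := fun t i => x i * Complex.exp (((i : ℕ) : ℂ) * t)
  have hX0 : ∀ t i, X t i ≠ 0 := fun t i => mul_ne_zero (hx0 i) (Complex.exp_ne_zero _)
  have hXr : ∀ t i j, X t j / X t i
      = (x j / x i) * Complex.exp ((((j : ℕ) : ℂ) - ((i : ℕ) : ℂ)) * t) := by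
    intro t i j
    simp only [X]
    rw [sub_mul, Complex.exp_sub, mul_div_mul_comm]
  have hr0 : ∀ i j, x j / x i ≠ 0 := fun i j => div_ne_zero (hx0 j) (hx0 i)
  have hXt : ∀ i j, Filter.Tendsto (fun t => X t j / X t i) (nhdsWithin (0 : ℂ) {0}ᶜ)
      (nhds (x j / x i)) := by
    intro i j
    have hc : Continuous fun t : ℂ =>
        (x j / x i) * Complex.exp ((((j : ℕ) : ℂ) - ((i : ℕ) : ℂ)) * t) := by fun_prop
    have := hc.tendsto 0
    simp only [mul_zero, Complex.exp_zero, mul_one] at this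
    simp only [hXr]
    exact this.mono_left nhdsWithin_le_nhds
  have hN : ∀ᶠ t in nhdsWithin (0 : ℂ) {0}ᶜ, ∀ i j, theta q (-(X t j / X t i)) ≠ 0 := by
    refine Filter.eventually_all.mpr fun i => Filter.eventually_all.mpr fun j => ?_
    exact ((theta_neg_cont hq0 hq1 _ (hr0 i j)).tendsto.comp (hXt i j)).eventually_ne (N i j)
  have hM : ∀ᶠ t in nhdsWithin (0 : ℂ) {0}ᶜ, ∀ i j, i ≠ j → theta q (X t j / X t i) ≠ 0 := by
    refine Filter.eventually_all.mpr fun i => Filter.eventually_all.mpr fun j => ?_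
    by_cases hij : i = j
    · exact .of_forall fun t h => absurd hij h
    · have hd : ((j : ℕ) : ℂ) - ((i : ℕ) : ℂ) ≠ 0 := by
        rw [sub_ne_zero]
        intro h
        exact hij (Fin.ext (Nat.cast_injective h).symm)
      filter_upwards [theta_exp_ne hq0 hq1 _ _ (hr0 i j) hd] with t ht _
      rw [hXr]
      exact ht
  have hE : ∀ᶠ t in nhdsWithin (0 : ℂ) {0}ᶜ,
      pfaff (2 * m + 1) (Matrix.of fun i j => fq q (X t j / X t i)) =
      (qPoch q (q : ℂ) / qPoch q (-(q : ℂ))) ^ (2 * m) *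
        ∏ i : Fin (2 * m + 1), ∏ j ∈ Finset.Ioi i, Hq q (X t j / X t i) := by
    filter_upwards [hN, hM] with t h1 h2
    exact generic_case hq0 hq1 m (X t) (hX0 t) h1 h2
  have l1 := pfaff_tendsto (l := nhdsWithin (0 : ℂ) {0}ᶜ) (2 * m + 1)
    (fun t i j => fq q (X t j / X t i)) (fun i j => fq q (x j / x i))
    (fun i j => (fq_cont hq0 hq1 _ (hr0 i j) (N i j)).tendsto.comp (hXt i j))
  have l2 : Filter.Tendsto (fun t => (qPoch q (q : ℂ) / qPoch q (-(q : ℂ))) ^ (2 * m) *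
        ∏ i : Fin (2 * m + 1), ∏ j ∈ Finset.Ioi i, Hq q (X t j / X t i))
      (nhdsWithin (0 : ℂ) {0}ᶜ) (nhds ((qPoch q (q : ℂ) / qPoch q (-(q : ℂ))) ^ (2 * m) *
        ∏ i : Fin (2 * m + 1), ∏ j ∈ Finset.Ioi i, Hq q (x j / x i))) := by
    refine Filter.Tendsto.const_mul _ (tendsto_finsetProd _ fun i _ => tendsto_finsetProd _
      fun j _ => ?_)
    exact (Hq_cont hq0 hq1 _ (hr0 i j) (N i j)).tendsto.comp (hXt i j)
  exact tendsto_nhds_unique (l1.congr' hE) l2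

end Main

/-- The odd elliptic pfaffian evaluation:
`pfaff(1 + 2(x_j/x_i)θ'(−x_j/x_i)/θ(−x_j/x_i))
  = ((q;q)_∞/(−q;q)_∞)^{2m} Π_{i<j} θ(x_j/x_i)/θ(−x_j/x_i)` for `2m+1` variables. -/
theorem elliptic_pfaffian_odd (q : ℝ) (hq0 : 0 < q) (hq1 : q < 1) (m : ℕ)
    (x : Fin (2 * m + 1) → ℂ) (hx0 : ∀ i, x i ≠ 0)
    (hθ : ∀ i j, i ≠ j → ∀ l : ℤ, x j / x i ≠ -(q : ℂ) ^ l) :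
    pfaff (2 * m + 1) (Matrix.of fun i j =>
        1 + 2 * (x j / x i) * deriv (theta q) (-(x j / x i)) / theta q (-(x j / x i))) =
      (qPoch q (q : ℂ) / qPoch q (-(q : ℂ))) ^ (2 * m) *
        ∏ i : Fin (2 * m + 1), ∏ j ∈ Finset.Ioi i,
          theta q (x j / x i) / theta q (-(x j / x i)) := by
  refine main_case hq0 hq1 m x hx0 fun i j => ?_
  by_cases hij : i = j
  · subst hij
    rw [div_self (hx0 i)]
    exact theta_neg_one_ne hq0 hq1
  · refine theta_ne_zero hq0 hq1 _ (neg_ne_zero.mpr (div_ne_zero (hx0 j) (hx0 i))) fun l h => ?_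
    exact hθ i j hij l (by rw [← h, neg_neg])
end

section
/- Let m ≥ 1 and put M = ⌊m/2⌋. Let (a_{ij})_{1≤i,j≤m} be an arbitrary complex matrix and let (b_{ij})_{1≤i,j≤m} be a skew-symmetric complex matrix. Then pfaff_{1≤i,j≤m}(a_{ij} − a_{ji} + b_{ij}) = (1/M!) · Σ_{s=0}^{M} 2^{s−M} · binom(M,s) · Σ_{σ∈S_m} sgn(σ) · Π_{i=1}^{s} a_{σ(2i−1),σ(2i)} · Π_{i=s+1}^{M} b_{σ(2i−1),σ(2i)}. -/
namespace PfaffAux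

variable {n ι : Type*} [Fintype n] [DecidableEq n] [Fintype ι] [DecidableEq ι]

/-- The alternating sum attached to a family of matrices and a family of pairs of positions. -/
noncomputable def L (p q : ι → n) (C : ι → n → n → ℂ) : ℂ :=
  ∑ σ : Equiv.Perm n, ((Equiv.Perm.sign σ : ℤ) : ℂ) * ∏ i, C i (σ (p i)) (σ (q i))

theorem L_reindex (p q : ι → n) (C : ι → n → n → ℂ) (τ : Equiv.Perm n) :
    L p q C = ((Equiv.Perm.sign τ : ℤ) : ℂ) * L (fun i => τ (p i)) (fun i => τ (q i)) C := by
  unfold L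
  rw [← Equiv.sum_comp (Equiv.mulRight τ), Finset.mul_sum]
  refine Finset.sum_congr rfl fun σ _ => ?_
  simp only [Equiv.coe_mulRight, Equiv.Perm.sign_mul, Equiv.Perm.mul_apply]
  push_cast
  ring

theorem L_flip (p q : ι → n) (hp : Function.Injective p) (hq : Function.Injective q)
    (hpq : ∀ i j, p i ≠ q j) (C : ι → n → n → ℂ) (k : ι) :
    L p q (Function.update C k (fun x y => C k y x)) = - L p q C := by
  rw [L_reindex p q C (Equiv.swap (p k) (q k)), Equiv.Perm.sign_swap (hpq k k)]
  simp only [Units.val_neg, Units.val_one, Int.cast_neg, Int.cast_one, neg_mul, one_mul, neg_neg]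
  unfold L
  refine Finset.sum_congr rfl fun σ _ => ?_
  congr 1
  refine Finset.prod_congr rfl fun i _ => ?_
  by_cases h : i = k
  · subst h; simp
  · beta_reduce
    rw [Function.update_of_ne h,
      Equiv.swap_apply_of_ne_of_ne (fun h' => h (hp h')) (hpq i k),
      Equiv.swap_apply_of_ne_of_ne (fun h' => hpq k i h'.symm) (fun h' => h (hq h'))]

theorem L_sub (p q : ι → n) (C : ι → n → n → ℂ) (k : ι) (X Y : n → n → ℂ) :
    L p q (Function.update C k (X - Y)) =
      L p q (Function.update C k X) - L p q (Function.update C k Y) := by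
  unfold L
  rw [← Finset.sum_sub_distrib]
  refine Finset.sum_congr rfl fun σ _ => ?_
  rw [← mul_sub]
  congr 1
  have key : ∀ Z : n → n → ℂ, ∏ i, Function.update C k Z i (σ (p i)) (σ (q i)) =
      Z (σ (p k)) (σ (q k)) * ∏ i ∈ Finset.univ.erase k, C i (σ (p i)) (σ (q i)) := by
    intro Z
    rw [← Finset.mul_prod_erase _ _ (Finset.mem_univ k), Function.update_self]
    congr 1
    refine Finset.prod_congr rfl fun i hi => ?_
    rw [Function.update_of_ne (Finset.ne_of_mem_erase hi)]
  rw [key, key, key, ← sub_mul]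
  rfl

theorem L_anti (p q : ι → n) (hp : Function.Injective p) (hq : Function.Injective q)
    (hpq : ∀ i j, p i ≠ q j) (C : ι → n → n → ℂ) (U : Finset ι) :
    L p q (fun i => if i ∈ U then C i - (fun x y => C i y x) else C i) =
      2 ^ U.card * L p q C := by
  induction U using Finset.induction_on with
  | empty => simp
  | insert k U hk ih =>
    rw [Finset.card_insert_of_notMem hk, pow_succ', mul_assoc, ← ih]
    set E : ι → n → n → ℂ := fun i => if i ∈ U then C i - (fun x y => C i y x) else C i with hE
    have hEk : E k = C k := by simp [hE, hk]
    have h1 : (fun i => if i ∈ insert k U then C i - (fun x y => C i y x) else C i) =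
        Function.update E k (E k - (fun x y => E k y x)) := by
      funext i
      by_cases h : i = k
      · subst h; rw [Function.update_self, hEk]; simp
      · rw [Function.update_of_ne h]; simp [hE, h]
    rw [h1, L_sub, L_flip p q hp hq hpq, Function.update_eq_self]
    ring

theorem L_perm (p q : ι → n) (hp : Function.Injective p) (hq : Function.Injective q)
    (hpq : ∀ i j, p i ≠ q j) (π : Equiv.Perm ι) :
    ∀ C : ι → n → n → ℂ, L p q (fun i => C (π i)) = L p q C := by
  induction π using Equiv.Perm.swap_induction_on with
  | one => intro C; rfl
  | swap_mul f x y hxy ih =>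
    intro C
    have h1 := ih (fun i => C (Equiv.swap x y i))
    simp only [Equiv.Perm.mul_apply]
    rw [h1, L_reindex p q C (Equiv.swap (p x) (p y) * Equiv.swap (q x) (q y)),
      Equiv.Perm.sign_mul, Equiv.Perm.sign_swap (hp.ne hxy), Equiv.Perm.sign_swap (hq.ne hxy)]
    simp only [mul_neg, mul_one, neg_neg, Units.val_one, Int.cast_one, one_mul]
    have e1 : ∀ i, (Equiv.swap (p x) (p y) * Equiv.swap (q x) (q y)) (p i) =
        p (Equiv.swap x y i) := by
      intro i
      rw [Equiv.Perm.mul_apply, Equiv.swap_apply_of_ne_of_ne (hpq i x) (hpq i y),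
        hp.swap_apply]
    have e2 : ∀ i, (Equiv.swap (p x) (p y) * Equiv.swap (q x) (q y)) (q i) =
        q (Equiv.swap x y i) := by
      intro i
      rw [Equiv.Perm.mul_apply, hq.swap_apply,
        Equiv.swap_apply_of_ne_of_ne (hpq x _).symm (hpq y _).symm]
    simp only [e1, e2]
    unfold L
    refine Finset.sum_congr rfl fun σ _ => ?_
    congr 1
    rw [← Equiv.prod_comp (Equiv.swap x y)]
    simp

theorem L_card (p q : ι → n) (hp : Function.Injective p) (hq : Function.Injective q)
    (hpq : ∀ i j, p i ≠ q j) (A B : n → n → ℂ) (T S : Finset ι) (h : T.card = S.card) :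
    L p q (fun i => if i ∈ T then A else B) = L p q (fun i => if i ∈ S then A else B) := by
  have e : {x // x ∈ T} ≃ {x // x ∈ S} := Fintype.equivOfCardEq (by simpa using h)
  rw [← L_perm p q hp hq hpq e.extendSubtype (fun i => if i ∈ S then A else B)]
  congr 1
  funext i
  by_cases hi : i ∈ T
  · rw [if_pos hi, if_pos (e.extendSubtype_mem i hi)]
  · rw [if_neg hi, if_neg (e.extendSubtype_not_mem i hi)]

theorem L_expand (p q : ι → n) (A B : n → n → ℂ) :
    L p q (fun _ => fun x y => 2 * A x y + B x y) =
      ∑ T ∈ (Finset.univ : Finset ι).powerset,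
        2 ^ T.card * L p q (fun i => if i ∈ T then A else B) := by
  unfold L
  simp only [Finset.mul_sum, Finset.prod_add]
  rw [Finset.sum_comm]
  refine Finset.sum_congr rfl fun T _ => Finset.sum_congr rfl fun σ _ => ?_
  have h : ∏ i, (if i ∈ T then A else B) (σ (p i)) (σ (q i)) =
      (∏ i ∈ T, A (σ (p i)) (σ (q i))) *
        ∏ i ∈ Finset.univ \ T, B (σ (p i)) (σ (q i)) := by
    rw [← Finset.prod_sdiff (Finset.subset_univ T), mul_comm]
    congr 1
    · exact Finset.prod_congr rfl fun i hi => by rw [if_pos hi]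
    · exact Finset.prod_congr rfl fun i hi => by rw [if_neg (Finset.mem_sdiff.1 hi).2]
  rw [h, Finset.prod_mul_distrib, Finset.prod_const]
  ring

end PfaffAux

theorem pfaff_split_fun (m : ℕ) (hm : 1 ≤ m) (A B : Fin m → Fin m → ℂ)
    (hB : ∀ i j, B j i = -B i j) :
    pfaff m (Matrix.of fun i j => A i j - A j i + B i j) =
      (1 / (Nat.factorial (m / 2) : ℂ)) *
        ∑ s ∈ Finset.range (m / 2 + 1),
          ((2 : ℂ) ^ s / (2 : ℂ) ^ (m / 2)) * (Nat.choose (m / 2) s : ℂ) *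
            ∑ σ : Equiv.Perm (Fin m), ((Equiv.Perm.sign σ : ℤ) : ℂ) *
              ∏ i : Fin (m / 2),
                (if (i : ℕ) < s then
                  A (σ ⟨2 * (i : ℕ), by have := i.isLt; omega⟩)
                    (σ ⟨2 * (i : ℕ) + 1, by have := i.isLt; omega⟩)
                else
                  B (σ ⟨2 * (i : ℕ), by have := i.isLt; omega⟩)
                    (σ ⟨2 * (i : ℕ) + 1, by have := i.isLt; omega⟩)) := by
  set M := m / 2 with hM
  let p : Fin M → Fin m := fun i => ⟨2 * (i : ℕ), by have := i.isLt; omega⟩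
  let q : Fin M → Fin m := fun i => ⟨2 * (i : ℕ) + 1, by have := i.isLt; omega⟩
  have hp : Function.Injective p := by
    intro i j h
    have := congrArg Fin.val h
    simp only [p] at this
    exact Fin.ext (by omega)
  have hq : Function.Injective q := by
    intro i j h
    have := congrArg Fin.val h
    simp only [q] at this
    exact Fin.ext (by omega)
  have hpq : ∀ i j, p i ≠ q j := by
    intro i j h
    have := congrArg Fin.val h
    simp only [p, q] at this
    omega
  have hl : pfaff m (Matrix.of fun i j => A i j - A j i + B i j) =
      (1 / ((2 : ℂ) ^ M * (Nat.factorial M : ℂ))) *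
        PfaffAux.L p q (fun _ => fun x y => A x y - A y x + B x y) := rfl
  have hanti : PfaffAux.L p q (fun _ => fun x y => A x y - A y x + B x y) =
      PfaffAux.L p q (fun _ => fun x y => 2 * A x y + B x y) := by
    have h := PfaffAux.L_anti p q hp hq hpq (fun _ => fun x y => A x y + B x y / 2) Finset.univ
    have h1 : (fun i : Fin M => if i ∈ (Finset.univ : Finset (Fin M)) then
        (fun x y => A x y + B x y / 2) - (fun x y => A y x + B y x / 2)
        else (fun x y => A x y + B x y / 2)) =
        (fun _ => fun x y => A x y - A y x + B x y) := by
      funext i x y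
      simp only [Finset.mem_univ, if_true, Pi.sub_apply]
      rw [hB x y]
      ring
    rw [h1] at h
    rw [h]
    unfold PfaffAux.L
    rw [Finset.mul_sum]
    refine Finset.sum_congr rfl fun σ _ => ?_
    rw [mul_left_comm]
    congr 1
    rw [Finset.card_univ, ← Finset.card_univ, ← Finset.prod_const, ← Finset.prod_mul_distrib]
    refine Finset.prod_congr rfl fun i _ => ?_
    ring
  rw [hl, hanti, PfaffAux.L_expand, Finset.sum_powerset, Finset.card_univ, Fintype.card_fin,
    Finset.mul_sum, Finset.mul_sum]
  refine Finset.sum_congr rfl fun s hs => ?_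
  have hsM : s ≤ M := by have := Finset.mem_range.1 hs; omega
  have hr : ∀ T ∈ Finset.powersetCard s (Finset.univ : Finset (Fin M)),
      (2 : ℂ) ^ T.card * PfaffAux.L p q (fun i => if i ∈ T then A else B) =
      2 ^ s * PfaffAux.L p q
        (fun i => if i ∈ Finset.univ.filter (fun j : Fin M => (j : ℕ) < s) then A else B) := by
    intro T hT
    have hc := (Finset.mem_powersetCard.1 hT).2
    rw [hc]
    congr 1
    apply PfaffAux.L_card p q hp hq hpq
    rw [hc, Fin.card_filter_val_lt, min_eq_right hsM]
  rw [Finset.sum_congr rfl hr, Finset.sum_const, Finset.card_powersetCard, Finset.card_univ,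
    Fintype.card_fin, nsmul_eq_mul]
  have hL : PfaffAux.L p q
        (fun i => if i ∈ Finset.univ.filter (fun j : Fin M => (j : ℕ) < s) then A else B) =
      ∑ σ : Equiv.Perm (Fin m), ((Equiv.Perm.sign σ : ℤ) : ℂ) *
        ∏ i : Fin M, (if (i : ℕ) < s then A (σ (p i)) (σ (q i)) else B (σ (p i)) (σ (q i))) := by
    unfold PfaffAux.L
    refine Finset.sum_congr rfl fun σ _ => ?_
    congr 1
    refine Finset.prod_congr rfl fun i _ => ?_
    by_cases h : (i : ℕ) < s <;> simp [h]
  rw [hL]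
  have h2 : (2 : ℂ) ^ M ≠ 0 := pow_ne_zero _ two_ne_zero
  have h3 : (Nat.factorial M : ℂ) ≠ 0 := by exact_mod_cast Nat.factorial_ne_zero M
  have fin : ∀ Q : ℂ, 1 / ((2 : ℂ) ^ M * (Nat.factorial M : ℂ)) *
      ((Nat.choose M s : ℂ) * (2 ^ s * Q)) =
      1 / (Nat.factorial M : ℂ) * ((2 : ℂ) ^ s / 2 ^ M * (Nat.choose M s : ℂ) * Q) := by
    intro Q
    field_simp
  exact fin _

/-- Expansion of `pfaff(a_{ij} − a_{ji} + b_{ij})` for skew-symmetric `B`: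
`(1/M!) Σ_{s=0}^{M} 2^{s−M} binom(M,s) Σ_σ sgn(σ) Π_{i=1}^{s} a_{σ(2i−1),σ(2i)}
  Π_{i=s+1}^{M} b_{σ(2i−1),σ(2i)}`. -/
theorem pfaff_split (m : ℕ) (hm : 1 ≤ m) (A B : Matrix (Fin m) (Fin m) ℂ)
    (hB : ∀ i j, B j i = -B i j) :
    pfaff m (Matrix.of fun i j => A i j - A j i + B i j) =
      (1 / (Nat.factorial (m / 2) : ℂ)) *
        ∑ s ∈ Finset.range (m / 2 + 1),
          ((2 : ℂ) ^ s / (2 : ℂ) ^ (m / 2)) * (Nat.choose (m / 2) s : ℂ) *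
            ∑ σ : Equiv.Perm (Fin m), ((Equiv.Perm.sign σ : ℤ) : ℂ) *
              ∏ i : Fin (m / 2),
                (if (i : ℕ) < s then
                  A (σ ⟨2 * (i : ℕ), by have := i.isLt; omega⟩)
                    (σ ⟨2 * (i : ℕ) + 1, by have := i.isLt; omega⟩)
                else
                  B (σ ⟨2 * (i : ℕ), by have := i.isLt; omega⟩)
                    (σ ⟨2 * (i : ℕ) + 1, by have := i.isLt; omega⟩)) := by
  exact pfaff_split_fun m hm A B hB
end
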